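/- arXiv:1902.04739 — 3 statements merged into one kernel-verified Lean document; each statement's English description precedes it below -/
import Mathlib

section
/- Let N ≥ 3, α ∈ (0, N), (N+α)/N < p < (N+α)/(N−2), and b > −(N−2)²/4. Then there exists a constant C > 0 such that for every smooth compactly supported u : ℝ^N → ℂ, ∫_{ℝ^N} (I_α ∗ |u|^p)(x) |u(x)|^p dx ≤ C ‖u‖_{L²}^{N+α−Np+2p} ( ∫_{ℝ^N} ( |∇u(x)|² + b |u(x)|²/|x|² ) dx )^{(Np−N−α)/2}. -/
open MeasureTheory Real
open scoped BigOperators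

/-- The squared Euclidean norm of the gradient: `∑ i |∂ᵢ u(x)|²`. -/
noncomputable def gradSq {N : ℕ} {F : Type*} [NormedAddCommGroup F] [NormedSpace ℝ F]
    (u : EuclideanSpace ℝ (Fin N) → F) (x : EuclideanSpace ℝ (Fin N)) : ℝ :=
  ∑ i, ‖fderiv ℝ u x (EuclideanSpace.single i 1)‖ ^ 2

/-- The normalization constant `𝒜 = Γ((N−α)/2) / (Γ(α/2) π^{N/2} 2^α)` of
the Riesz potential `I_α(x) = 𝒜 |x|^{α−N}`. -/
noncomputable def rieszConst (N : ℕ) (α : ℝ) : ℝ :=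
  Real.Gamma (((N : ℝ) - α) / 2) /
    (Real.Gamma (α / 2) * Real.pi ^ ((N : ℝ) / 2) * 2 ^ α)

/-- The Riesz convolution `(I_α ∗ |u|^p)(x) = ∫ I_α(x−y) |u(y)|^p dy`. -/
noncomputable def rieszConv (N : ℕ) (α p : ℝ) (u : EuclideanSpace ℝ (Fin N) → ℂ)
    (x : EuclideanSpace ℝ (Fin N)) : ℝ :=
  ∫ y, rieszConst N α * ‖x - y‖ ^ (α - (N : ℝ)) * ‖u y‖ ^ p

/-- The Choquard nonlocal term `∫ (I_α ∗ |u|^p)(x) |u(x)|^p dx`. -/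
noncomputable def choquardTerm (N : ℕ) (α p : ℝ)
    (u : EuclideanSpace ℝ (Fin N) → ℂ) : ℝ :=
  ∫ x, rieszConv N α p u x * ‖u x‖ ^ p

/-- The `H¹` norm `(∫ (|u|² + |∇u|²))^{1/2}`. -/
noncomputable def H1Norm {N : ℕ} (u : EuclideanSpace ℝ (Fin N) → ℂ) : ℝ :=
  Real.sqrt (∫ x, (‖u x‖ ^ 2 + gradSq u x))

lemma gnc_young {E : Type*} [NormedAddCommGroup E] [NormedSpace ℝ E] [FiniteDimensional ℝ E]
    [MeasurableSpace E] [BorelSpace E] (μ : Measure E) [μ.IsAddHaarMeasure]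
    (k f : E → ENNReal) (hk : Measurable k) (hf : Measurable f)
    (e : ℝ) (he0 : 0 < e) (he1 : e < 1) :
    ∫⁻ x, ∫⁻ y, k (x - y) * f y * f x ∂μ ∂μ ≤
      (∫⁻ z, k z ^ (1/e) ∂μ) ^ e * (∫⁻ x, f x ^ (2/(2-e)) ∂μ) ^ (2-e) := by
  set q : ℝ := 2/(2-e) with hq
  have hq0 : 0 < q := by rw [hq]; apply div_pos <;> linarith
  have h2e : (2 - e) ≠ 0 := by linarith
  have hqe : q * (1 - e) + q * (e/2) = 1 := by rw [hq]; field_simp; ring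
  rw [← lintegral_prod (f := fun z : E × E => k (z.1 - z.2) * f z.2 * f z.1)
    (by fun_prop)]
  let F : Fin 3 → E × E → ENNReal := ![fun z => f z.1 ^ q * f z.2 ^ q,
    fun z => f z.1 ^ q * k (z.1 - z.2) ^ (1/e), fun z => f z.2 ^ q * k (z.1 - z.2) ^ (1/e)]
  let P : Fin 3 → ℝ := ![1 - e, e/2, e/2]
  have key := ENNReal.lintegral_prod_norm_pow_le (μ := μ.prod μ) Finset.univ (f := F) (p := P)
    (by
      intro i _
      fin_cases i <;> simp only [F] <;> simp <;> fun_prop)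
    (by simp [P, Fin.sum_univ_three]; ring)
    (by
      intro i _
      fin_cases i <;> simp [P] <;> linarith)
  have h0 : ∫⁻ z, F 0 z ∂(μ.prod μ) = (∫⁻ x, f x ^ q ∂μ) * (∫⁻ x, f x ^ q ∂μ) := by
    simp only [F, Matrix.cons_val_zero]
    exact lintegral_prod_mul (f := fun x => f x ^ q) (g := fun x => f x ^ q) (by fun_prop) (by fun_prop)
  have h1 : ∫⁻ z, F 1 z ∂(μ.prod μ) = (∫⁻ x, f x ^ q ∂μ) * (∫⁻ z, k z ^ (1/e) ∂μ) := by
    simp only [F, Matrix.cons_val_one, Matrix.cons_val_zero]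
    rw [lintegral_prod _ (by fun_prop)]
    simp only
    rw [← lintegral_mul_const _ (by fun_prop)]
    congr 1; ext x
    rw [lintegral_const_mul _ (by fun_prop)]
    congr 1
    exact lintegral_sub_left_eq_self (fun z => k z ^ (1/e)) x
  have h2 : ∫⁻ z, F 2 z ∂(μ.prod μ) = (∫⁻ x, f x ^ q ∂μ) * (∫⁻ z, k z ^ (1/e) ∂μ) := by
    simp only [F, Matrix.cons_val]
    rw [lintegral_prod_symm _ (by fun_prop)]
    simp only
    rw [← lintegral_mul_const _ (by fun_prop)]
    congr 1; ext x
    rw [lintegral_const_mul _ (by fun_prop)]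
    congr 1
    exact lintegral_sub_right_eq_self (fun z => k z ^ (1/e)) x
  rw [Fin.prod_univ_three, h0, h1, h2] at key
  simp only [Fin.prod_univ_three] at key
  have e2 : (0:ℝ) ≤ e/2 := by linarith
  have e3 : (0:ℝ) ≤ 1 - e := by linarith
  calc _ ≤ _ := le_of_eq ?_
    _ ≤ _ := key
    _ = _ := ?_
  · congr 1; ext z
    simp only [F, P, Matrix.cons_val]
    rw [ENNReal.mul_rpow_of_nonneg _ _ e3, ENNReal.mul_rpow_of_nonneg _ _ e2,
      ENNReal.mul_rpow_of_nonneg _ _ e2]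
    simp only [← ENNReal.rpow_mul]
    have hk1 : k (z.1 - z.2) ^ (1/e * (e/2)) * k (z.1 - z.2) ^ (1/e * (e/2)) = k (z.1 - z.2) := by
      rw [← ENNReal.rpow_add_of_nonneg _ _ (by positivity) (by positivity)]
      rw [show 1/e * (e/2) + 1/e * (e/2) = 1 by field_simp; norm_num, ENNReal.rpow_one]
    have hf1 : ∀ x, f x ^ (q * (1-e)) * f x ^ (q * (e/2)) = f x := by
      intro x
      rw [← ENNReal.rpow_add_of_nonneg _ _ (by positivity) (by positivity), hqe, ENNReal.rpow_one]
    calc _ = (k (z.1 - z.2) ^ (1/e * (e/2)) * k (z.1 - z.2) ^ (1/e * (e/2))) *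
          (f z.2 ^ (q * (1-e)) * f z.2 ^ (q * (e/2))) * (f z.1 ^ (q * (1-e)) * f z.1 ^ (q * (e/2))) := by
            rw [hk1, hf1, hf1]
      _ = _ := by ring
  · simp only [P, Matrix.cons_val]
    generalize (∫⁻ x, f x ^ q ∂μ) = X
    generalize (∫⁻ z, k z ^ (1/e) ∂μ) = Y
    rw [ENNReal.mul_rpow_of_nonneg _ _ e3, ENNReal.mul_rpow_of_nonneg _ _ e2]
    calc _ = (Y ^ (e/2) * Y ^ (e/2)) * ((X ^ (1-e) * X ^ (1-e)) * (X ^ (e/2) * X ^ (e/2))) := by ring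
      _ = _ := by
        rw [← ENNReal.rpow_add_of_nonneg _ _ e2 e2, ← ENNReal.rpow_add_of_nonneg _ _ e2 e2,
          ← ENNReal.rpow_add_of_nonneg _ _ e3 e3, ← ENNReal.rpow_add_of_nonneg _ _ (by linarith) (by linarith)]
        congr 2 <;> ring

lemma gnc_interp {E : Type*} [MeasurableSpace E] (μ : Measure E) 
    (f : E → ENNReal) (hf : Measurable f) (m t : ℝ) (h2t : 2 < t) (htm : t < m) :
    ∫⁻ x, f x ^ t ∂μ ≤ (∫⁻ x, f x ^ (2:ℝ) ∂μ) ^ (1 - (t-2)/(m-2)) *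
      (∫⁻ x, f x ^ m ∂μ) ^ ((t-2)/(m-2)) := by
  have h1 : 0 ≤ (t-2)/(m-2) := by apply div_nonneg <;> linarith
  have h2 : 0 ≤ 1 - (t-2)/(m-2) := by
    rw [sub_nonneg, div_le_one (by linarith)]; linarith
  refine le_trans (le_of_eq ?_) (ENNReal.lintegral_mul_norm_pow_le (by fun_prop) (by fun_prop) h2 h1 (by ring))
  congr 1; ext x
  have : m - 2 ≠ 0 := by linarith
  rw [← ENNReal.rpow_mul, ← ENNReal.rpow_mul, ← ENNReal.rpow_add_of_nonneg]
  · congr 1; field_simp; ring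
  · positivity
  · have : 0 < m := by linarith
    positivity

/-- truncated kernel -/
noncomputable def gncKer {E : Type*} [NormedAddCommGroup E] (β : ℝ) (S : Set ℝ) (z : E) : ENNReal :=
  ENNReal.ofReal (S.indicator (fun r => r ^ β) ‖z‖)

lemma gncKer_meas {E : Type*} [NormedAddCommGroup E] [MeasurableSpace E] [BorelSpace E]
    (β : ℝ) (S : Set ℝ) (hS : MeasurableSet S) : Measurable (gncKer (E := E) β S) := by
  unfold gncKer
  apply ENNReal.measurable_ofReal.comp
  have : Measurable (S.indicator (fun r : ℝ => r ^ β)) := by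
    apply Measurable.indicator _ hS
    fun_prop
  exact this.comp measurable_norm

lemma gncKer_int {E : Type*} [NormedAddCommGroup E] [NormedSpace ℝ E] [FiniteDimensional ℝ E]
    [Nontrivial E]
    [MeasurableSpace E] [BorelSpace E] (μ : Measure E) [μ.IsAddHaarMeasure]
    (β e : ℝ) (he0 : 0 < e) (S : Set ℝ) (hS : MeasurableSet S)
    (hi : IntegrableOn (fun r : ℝ => r ^ ((Module.finrank ℝ E : ℝ) - 1 + β / e)) (Set.Ioi 0 ∩ S)) :
    (∫⁻ z, gncKer β S z ^ (1/e) ∂μ) = ENNReal.ofReal (Module.finrank ℝ E * μ.real (Metric.ball 0 1) *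
       ∫ r in Set.Ioi 0 ∩ S, r ^ ((Module.finrank ℝ E : ℝ) - 1 + β / e)) := by
  have hn : 0 < Module.finrank ℝ E := Module.finrank_pos
  let g : ℝ → ℝ := fun r => (S.indicator (fun r => r ^ β) r) ^ (1/e)
  have hg : ∀ r > 0, r ^ (Module.finrank ℝ E - 1) • g r =
      S.indicator (fun r : ℝ => r ^ ((Module.finrank ℝ E : ℝ) - 1 + β / e)) r := by
    intro r hr
    by_cases hrS : r ∈ S
    · simp only [g, hrS, Set.indicator_of_mem, smul_eq_mul]
      rw [← rpow_mul hr.le, rpow_add hr, ← rpow_natCast, Nat.cast_sub (by omega)]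
      simp [div_eq_mul_inv]
    · simp [g, hrS]
      right
      rw [zero_rpow (by positivity)]
  have hI : IntegrableOn (fun r => r ^ (Module.finrank ℝ E - 1) • g r) (Set.Ioi 0) := by
    rw [integrableOn_congr_fun (g := S.indicator (fun r : ℝ => r ^ ((Module.finrank ℝ E : ℝ) - 1 + β / e))) (s := Set.Ioi 0) (fun r hr => hg r hr) measurableSet_Ioi]
    rw [IntegrableOn, integrable_indicator_iff hS, IntegrableOn, Measure.restrict_restrict hS, Set.inter_comm]
    exact hi
  have hI2 := (integrable_fun_norm_addHaar μ (f := g)).2 hI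
  have hg0 : ∀ z : E, 0 ≤ S.indicator (fun r => r ^ β) ‖z‖ := by
    intro z
    apply Set.indicator_apply_nonneg
    intro _; positivity
  have : ∀ z : E, gncKer β S z ^ (1/e) = ENNReal.ofReal (g ‖z‖) := by
    intro z
    unfold gncKer
    rw [ENNReal.ofReal_rpow_of_nonneg (hg0 z) (by positivity)]
  simp only [this]
  rw [← ofReal_integral_eq_lintegral_ofReal hI2 (Filter.Eventually.of_forall fun z => rpow_nonneg (hg0 z) _)]
  congr 1
  rw [integral_fun_norm_addHaar μ g, setIntegral_congr_fun measurableSet_Ioi (fun r hr => hg r hr),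
    setIntegral_indicator hS]
  simp [mul_assoc]

lemma gncKer_inner {E : Type*} [NormedAddCommGroup E] [NormedSpace ℝ E] [FiniteDimensional ℝ E]
    [Nontrivial E]
    [MeasurableSpace E] [BorelSpace E] (μ : Measure E) [μ.IsAddHaarMeasure]
    (β e : ℝ) (he0 : 0 < e) (h : 0 < β + Module.finrank ℝ E * e) :
    ∃ K : ℝ, 0 ≤ K ∧ ∀ R > 0, (∫⁻ z, gncKer β (Set.Iic R) z ^ (1/e) ∂μ) ^ e ≤
      ENNReal.ofReal (K * R ^ (β + Module.finrank ℝ E * e)) := by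
  set n : ℝ := (Module.finrank ℝ E : ℝ) with hn
  have hs : -1 < n - 1 + β / e := by
    have : 0 < (β + n * e) / e := by positivity
    have : (β + n * e) / e = β / e + n := by field_simp
    linarith
  have hs2 : 0 < n + β / e := by linarith
  refine ⟨(n * μ.real (Metric.ball 0 1) / (n + β / e)) ^ e, by positivity, fun R hR => ?_⟩
  have hset : Set.Ioi (0:ℝ) ∩ Set.Iic R = Set.Ioc 0 R := rfl
  have hi := intervalIntegral.intervalIntegrable_rpow' (a := 0) (b := R) hs
  rw [gncKer_int μ β e he0 _ measurableSet_Iic, hset, ← intervalIntegral.integral_of_le hR.le,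
    integral_rpow (Or.inl hs), ← hn, ENNReal.ofReal_rpow_of_nonneg _ he0.le]
  · apply le_of_eq
    congr 1
    rw [zero_rpow (by linarith), sub_zero, show n - 1 + β/e + 1 = n + β/e by ring,
      ← mul_div_assoc, mul_div_right_comm, mul_rpow (by positivity) (by positivity), ← rpow_mul hR.le]
    congr 2; field_simp; ring
  · rw [zero_rpow (by linarith), sub_zero, show n - 1 + β/e + 1 = n + β/e by ring]
    positivity
  · rw [hset]
    exact (intervalIntegrable_iff_integrableOn_Ioc_of_le hR.le).1 hi

lemma gncKer_outer {E : Type*} [NormedAddCommGroup E] [NormedSpace ℝ E] [FiniteDimensional ℝ E]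
    [Nontrivial E]
    [MeasurableSpace E] [BorelSpace E] (μ : Measure E) [μ.IsAddHaarMeasure]
    (β e : ℝ) (he0 : 0 < e) (h : β + Module.finrank ℝ E * e < 0) :
    ∃ K : ℝ, 0 ≤ K ∧ ∀ R > 0, (∫⁻ z, gncKer β (Set.Ioi R) z ^ (1/e) ∂μ) ^ e ≤
      ENNReal.ofReal (K * R ^ (β + Module.finrank ℝ E * e)) := by
  set n : ℝ := (Module.finrank ℝ E : ℝ) with hn
  have hs : n - 1 + β / e < -1 := by
    have : (β + n * e) / e < 0 := div_neg_of_neg_of_pos h he0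
    have : (β + n * e) / e = β / e + n := by field_simp
    linarith
  have hs2 : 0 < -(n + β / e) := by linarith
  refine ⟨(n * μ.real (Metric.ball 0 1) / (-(n + β / e))) ^ e, by positivity, fun R hR => ?_⟩
  have hset : Set.Ioi (0:ℝ) ∩ Set.Ioi R = Set.Ioi R := by
    ext x; simp only [Set.mem_inter_iff, Set.mem_Ioi]; constructor
    · exact fun h => h.2
    · exact fun h => ⟨hR.trans h, h⟩
  rw [gncKer_int μ β e he0 _ measurableSet_Ioi, hset, 
    integral_Ioi_rpow_of_lt hs hR, ← hn, show n - 1 + β/e + 1 = n + β/e by ring, neg_div, ← div_neg, ENNReal.ofReal_rpow_of_nonneg _ he0.le]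
  · apply le_of_eq
    congr 1
    rw [
      ← mul_div_assoc, mul_div_right_comm, mul_rpow (by positivity) (by positivity), ← rpow_mul hR.le]
    congr 2; field_simp; ring
  · positivity
  · rw [hset]
    exact integrableOn_Ioi_rpow_of_lt hs hR

lemma gnc_gradSq_cont {N : ℕ} {u : EuclideanSpace ℝ (Fin N) → ℂ} (hu : ContDiff ℝ (⊤ : ℕ∞) u) :
    Continuous (gradSq u) := by
  unfold gradSq
  have := hu.continuous_fderiv (by simp)
  fun_prop

lemma gnc_gradSq_supp {N : ℕ} {u : EuclideanSpace ℝ (Fin N) → ℂ} (hs : HasCompactSupport u) :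
    HasCompactSupport (gradSq u) := by
  refine (hs.fderiv (𝕜 := ℝ)).mono ?_
  intro x hx
  contrapose! hx
  simp only [Function.mem_support, not_not] at hx
  simp [gradSq, hx]

lemma gnc_hardy_eps {N : ℕ} (hN : 3 ≤ N) {u : EuclideanSpace ℝ (Fin N) → ℂ}
    (hu : ContDiff ℝ (⊤ : ℕ∞) u) (hs : HasCompactSupport u) (ε : ℝ) (hε : 0 < ε) :
    (((N : ℝ) - 2) / 2) ^ 2 * ∫ x, ‖u x‖ ^ 2 / (‖x‖ ^ 2 + ε) ≤ ∫ x, gradSq u x := by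
  set c : ℝ := ((N : ℝ) - 2) / 2 with hc
  have hN' : (3 : ℝ) ≤ N := by exact_mod_cast hN
  have hc0 : 0 < c := by rw [hc]; linarith
  have hρ : ∀ x : EuclideanSpace ℝ (Fin N), 0 < ‖x‖ ^ 2 + ε := fun x => by positivity
  let e : Fin N → EuclideanSpace ℝ (Fin N) := fun i => EuclideanSpace.single i 1
  let F : Fin N → EuclideanSpace ℝ (Fin N) → ℝ := fun i x => x i / (‖x‖ ^ 2 + ε)
  let w : EuclideanSpace ℝ (Fin N) → ℝ := fun x => ‖u x‖ ^ 2
  have hw : ContDiff ℝ (⊤ : ℕ∞) w := hu.norm_sq ℝ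
  have hws : HasCompactSupport w := hs.comp_left (g := fun z : ℂ => ‖z‖ ^ 2) (by simp)
  have hF : ∀ i, ContDiff ℝ (⊤ : ℕ∞) (F i) := by
    intro i
    apply ContDiff.div
    · fun_prop
    · exact (contDiff_norm_sq ℝ).add contDiff_const
    · intro x; exact (hρ x).ne'
  have hwd : ∀ x i, fderiv ℝ w x (e i) = 2 * inner ℝ (u x) (fderiv ℝ u x (e i)) := by
    intro x i
    have h1 : HasFDerivAt u (fderiv ℝ u x) x := (hu.differentiable (by simp) x).hasFDerivAt
    rw [h1.norm_sq.fderiv]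
    simp
    ring
  have hFd : ∀ x i, fderiv ℝ (F i) x (e i) =
      1 / (‖x‖ ^ 2 + ε) - 2 * (x i) ^ 2 / (‖x‖ ^ 2 + ε) ^ 2 := by
    intro x i
    have h1 : HasFDerivAt (fun x : EuclideanSpace ℝ (Fin N) => ‖x‖ ^ 2 + ε)
        (2 • (innerSL ℝ x)) x := by
      have := ((hasFDerivAt_id x).norm_sq).add_const ε
      simpa using this
    have h2 : HasFDerivAt (fun x : EuclideanSpace ℝ (Fin N) => x i)
        (EuclideanSpace.proj i : EuclideanSpace ℝ (Fin N) →L[ℝ] ℝ) x :=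
      (EuclideanSpace.proj i : EuclideanSpace ℝ (Fin N) →L[ℝ] ℝ).hasFDerivAt
    have h3 := h2.mul ((hasDerivAt_inv (hρ x).ne').comp_hasFDerivAt x h1)
    have h4 : F i = (fun x : EuclideanSpace ℝ (Fin N) => x i) *
        ((fun y : ℝ => y⁻¹) ∘ fun x : EuclideanSpace ℝ (Fin N) => ‖x‖ ^ 2 + ε) := by
      ext y; simp [F, div_eq_mul_inv]
    rw [h4, h3.fderiv]
    have := (hρ x).ne'
    simp [e, EuclideanSpace.inner_single_right]
    field_simp
    ring
  have hsum : ∀ x : EuclideanSpace ℝ (Fin N), ∑ i, (x i) ^ 2 = ‖x‖ ^ 2 := by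
    intro x; rw [EuclideanSpace.norm_sq_eq]; simp
  -- continuity and integrability
  have hwc := hw.continuous
  have hwdc : ∀ i, Continuous fun x => fderiv ℝ w x (e i) := fun i => by
    have := hw.continuous_fderiv (by simp)
    fun_prop
  have hFc : ∀ i, Continuous (F i) := fun i => (hF i).continuous
  have hFdc : ∀ i, Continuous fun x => fderiv ℝ (F i) x (e i) := fun i => by
    have := (hF i).continuous_fderiv (by simp)
    fun_prop
  have hwds : ∀ i, HasCompactSupport fun x => fderiv ℝ w x (e i) := fun i =>
    hws.fderiv_apply (𝕜 := ℝ) (e i)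
  have I1 : ∀ i, Integrable fun x => F i x * fderiv ℝ w x (e i) := fun i =>
    ((hFc i).mul (hwdc i)).integrable_of_hasCompactSupport ((hwds i).mul_left)
  have I2 : ∀ i, Integrable fun x => fderiv ℝ (F i) x (e i) * w x := fun i =>
    ((hFdc i).mul hwc).integrable_of_hasCompactSupport (hws.mul_left)
  have I3 : ∀ i, Integrable fun x => F i x * w x := fun i =>
    ((hFc i).mul hwc).integrable_of_hasCompactSupport (hws.mul_left)
  have I4 : ∀ i, Integrable fun x => (F i x) ^ 2 * w x := fun i =>
    (((hFc i).pow 2).mul hwc).integrable_of_hasCompactSupport (hws.mul_left)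
  have I5 : Integrable (gradSq u) :=
    (gnc_gradSq_cont hu).integrable_of_hasCompactSupport (gnc_gradSq_supp hs)
  have I6 : Integrable fun x => w x / (‖x‖ ^ 2 + ε) := by
    have : Continuous fun x : EuclideanSpace ℝ (Fin N) => (‖x‖ ^ 2 + ε)⁻¹ := by
      apply Continuous.inv₀
      · fun_prop
      · intro x; exact (hρ x).ne'
    simp only [div_eq_mul_inv]
    exact (hwc.mul this).integrable_of_hasCompactSupport (hws.mul_right)
  have ibp : ∀ i, ∫ x, F i x * fderiv ℝ w x (e i) = - ∫ x, fderiv ℝ (F i) x (e i) * w x :=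
    fun i => integral_mul_fderiv_eq_neg_fderiv_mul_of_integrable (I2 i) (I1 i) (I3 i)
      (fun x _ => (hF i).differentiable (by simp) x) (fun x _ => hw.differentiable (by simp) x)
  have pt1 : ∀ x, 0 ≤ gradSq u x + ∑ i, (c * (F i x * fderiv ℝ w x (e i)) +
      c ^ 2 * ((F i x) ^ 2 * w x)) := by
    intro x
    have : gradSq u x + ∑ i, (c * (F i x * fderiv ℝ w x (e i)) +
      c ^ 2 * ((F i x) ^ 2 * w x)) = ∑ i, ‖fderiv ℝ u x (e i) + (c * F i x) • u x‖ ^ 2 := by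
      unfold gradSq
      rw [← Finset.sum_add_distrib]
      refine Finset.sum_congr rfl fun i _ => ?_
      rw [norm_add_sq_real, hwd, norm_smul, inner_smul_right, real_inner_comm, mul_pow, norm_eq_abs, sq_abs]
      simp only [w, e]
      ring
    rw [this]
    positivity
  have pt2 : ∀ x, c ^ 2 * (w x / (‖x‖ ^ 2 + ε)) ≤
      ∑ i, (c * (fderiv ℝ (F i) x (e i) * w x) - c ^ 2 * ((F i x) ^ 2 * w x)) := by
    intro x
    have hw0 : 0 ≤ w x := by positivity
    have hr := hρ x
    have : ∑ i, (c * (fderiv ℝ (F i) x (e i) * w x) - c ^ 2 * ((F i x) ^ 2 * w x)) =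
       w x * (c * (N / (‖x‖ ^ 2 + ε) - 2 * ‖x‖ ^ 2 / (‖x‖ ^ 2 + ε) ^ 2) -
         c ^ 2 * (‖x‖ ^ 2 / (‖x‖ ^ 2 + ε) ^ 2)) := by
      rw [← hsum x]
      simp only [hFd, F]
      rw [hsum x]
      have : ∀ i, (c * ((1 / (‖x‖ ^ 2 + ε) - 2 * (x i) ^ 2 / (‖x‖ ^ 2 + ε) ^ 2) * w x) - c ^ 2 * ((x i / (‖x‖ ^ 2 + ε)) ^ 2 * w x)) =
        w x * (c * (1 / (‖x‖ ^ 2 + ε))) - (w x * (2 * c + c ^ 2) / (‖x‖ ^ 2 + ε) ^ 2) * (x i) ^ 2 := by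
        intro i; field_simp; ring
      simp only [this]
      rw [Finset.sum_sub_distrib, Finset.sum_const, ← Finset.mul_sum, hsum x]
      simp
      field_simp
      ring
    rw [this, mul_div_assoc', mul_comm (c ^ 2), mul_div_assoc]
    apply mul_le_mul_of_nonneg_left _ hw0
    have hNc : (N : ℝ) = 2 * c + 2 := by rw [hc]; ring
    rw [hNc]
    have hle : ‖x‖ ^ 2 ≤ ‖x‖ ^ 2 + ε := by linarith
    have : (‖x‖ ^ 2) / (‖x‖ ^ 2 + ε) ^ 2 ≤ 1 / (‖x‖ ^ 2 + ε) := by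
      rw [div_le_div_iff₀ (by positivity) hr]
      nlinarith
    have h2 : 0 < 2 * c + c ^ 2 := by positivity
    have h3 := mul_le_mul_of_nonneg_left this h2.le
    have h4 : c ^ 2 / (‖x‖ ^ 2 + ε) = c ^ 2 * (1 / (‖x‖ ^ 2 + ε)) := by ring
    have h5 : (2 * c + 2) / (‖x‖ ^ 2 + ε) = (2 * c + 2) * (1 / (‖x‖ ^ 2 + ε)) := by ring
    have h6 : 2 * ‖x‖ ^ 2 / (‖x‖ ^ 2 + ε) ^ 2 = 2 * (‖x‖ ^ 2 / (‖x‖ ^ 2 + ε) ^ 2) := by ring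
    rw [h4, h5, h6]
    linarith
  have M1 : ∀ i, Integrable fun x => c * (F i x * fderiv ℝ w x (e i)) + c ^ 2 * ((F i x) ^ 2 * w x) :=
    fun i => ((I1 i).const_mul c).add ((I4 i).const_mul (c ^ 2))
  have M2 : ∀ i, Integrable fun x => c * (fderiv ℝ (F i) x (e i) * w x) - c ^ 2 * ((F i x) ^ 2 * w x) :=
    fun i => ((I2 i).const_mul c).sub ((I4 i).const_mul (c ^ 2))
  have J1 : 0 ≤ ∫ x, (gradSq u x + ∑ i, (c * (F i x * fderiv ℝ w x (e i)) +
      c ^ 2 * ((F i x) ^ 2 * w x))) := integral_nonneg pt1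
  have J2 := integral_mono (I6.const_mul (c ^ 2))
    (integrable_finsetSum _ fun i _ => M2 i) pt2
  rw [integral_const_mul] at J2
  rw [integral_add I5 (integrable_finsetSum _ fun i _ => M1 i)] at J1
  rw [integral_finsetSum _ (fun i _ => M2 i)] at J2
  rw [integral_finsetSum _ (fun i _ => M1 i)] at J1
  have K1 : ∑ i, ∫ x, (c * (F i x * fderiv ℝ w x (e i)) + c ^ 2 * ((F i x) ^ 2 * w x)) =
     - ∑ i, ∫ x, (c * (fderiv ℝ (F i) x (e i) * w x) - c ^ 2 * ((F i x) ^ 2 * w x)) := by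
    rw [← Finset.sum_neg_distrib]
    refine Finset.sum_congr rfl fun i _ => ?_
    rw [integral_add ((I1 i).const_mul c) ((I4 i).const_mul (c ^ 2)),
      integral_sub ((I2 i).const_mul c) ((I4 i).const_mul (c ^ 2)), integral_const_mul, integral_const_mul,
      integral_const_mul, ibp]
    ring
  rw [K1] at J1
  change c ^ 2 * ∫ x, w x / (‖x‖ ^ 2 + ε) ≤ _
  linarith

lemma gnc_hardy {N : ℕ} (hN : 3 ≤ N) {u : EuclideanSpace ℝ (Fin N) → ℂ}
    (hu : ContDiff ℝ (⊤ : ℕ∞) u) (hs : HasCompactSupport u) :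
    Integrable (fun x => ‖u x‖ ^ 2 / ‖x‖ ^ 2) ∧
    (((N : ℝ) - 2) / 2) ^ 2 * ∫ x, ‖u x‖ ^ 2 / ‖x‖ ^ 2 ≤ ∫ x, gradSq u x := by
  have hN' : (3 : ℝ) ≤ N := by exact_mod_cast hN
  have hc0 : 0 < (((N : ℝ) - 2) / 2) ^ 2 := by
    have : 0 < ((N : ℝ) - 2) / 2 := by linarith
    positivity
  set c : ℝ := (((N : ℝ) - 2) / 2) ^ 2 with hc
  set G := ∫ x, gradSq u x with hG
  have huc := hu.continuous
  let ε : ℕ → ℝ := fun n => 1 / ((n : ℝ) + 1)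
  have hε : ∀ n, 0 < ε n := fun n => by positivity
  have hG0 : 0 ≤ G := integral_nonneg fun x => by unfold gradSq; positivity
  have hρ : ∀ n, ∀ x : EuclideanSpace ℝ (Fin N), 0 < ‖x‖ ^ 2 + ε n := fun n x => by
    have := hε n; positivity
  have hcont : ∀ n, Continuous fun x => ‖u x‖ ^ 2 / (‖x‖ ^ 2 + ε n) := fun n => by
    apply Continuous.div
    · fun_prop
    · fun_prop
    · intro x; exact (hρ n x).ne'
  have hb : ∀ n, ∫⁻ x, ENNReal.ofReal (‖u x‖ ^ 2 / (‖x‖ ^ 2 + ε n)) ≤ ENNReal.ofReal (G / c) := by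
    intro n
    rw [← ofReal_integral_eq_lintegral_ofReal]
    · apply ENNReal.ofReal_le_ofReal
      rw [le_div_iff₀ hc0, mul_comm]
      exact gnc_hardy_eps hN hu hs _ (hε n)
    · apply (hcont n).integrable_of_hasCompactSupport
      refine hs.mono ?_
      intro x hx
      contrapose! hx
      simp only [Function.mem_support, not_not] at hx
      simp [hx]
    · exact Filter.Eventually.of_forall fun x => div_nonneg (by positivity) (hρ n x).le
  have hlim : ∫⁻ x, ENNReal.ofReal (‖u x‖ ^ 2 / ‖x‖ ^ 2) ≤ ENNReal.ofReal (G / c) := by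
    calc _ ≤ ∫⁻ x, Filter.liminf (fun n => ENNReal.ofReal (‖u x‖ ^ 2 / (‖x‖ ^ 2 + ε n))) Filter.atTop := by
          apply lintegral_mono
          intro x
          by_cases hx : x = 0
          · simp [hx]
          have : Filter.Tendsto (fun n => ENNReal.ofReal (‖u x‖ ^ 2 / (‖x‖ ^ 2 + ε n))) Filter.atTop
              (nhds (ENNReal.ofReal (‖u x‖ ^ 2 / ‖x‖ ^ 2))) := by
            apply ENNReal.tendsto_ofReal
            apply Filter.Tendsto.div tendsto_const_nhds
            · have h0 : Filter.Tendsto ε Filter.atTop (nhds 0) := tendsto_one_div_add_atTop_nhds_zero_nat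
              simpa using h0.const_add (‖x‖ ^ 2)
            · positivity
          exact this.liminf_eq.ge
      _ ≤ Filter.liminf (fun n => ∫⁻ x, ENNReal.ofReal (‖u x‖ ^ 2 / (‖x‖ ^ 2 + ε n))) Filter.atTop := by
          apply lintegral_liminf_le
          intro n
          exact ENNReal.measurable_ofReal.comp (hcont n).measurable
      _ ≤ Filter.liminf (fun n : ℕ => ENNReal.ofReal (G / c)) Filter.atTop :=
          Filter.liminf_le_liminf (Filter.Eventually.of_forall hb)
      _ = _ := by simp
  have hm : Measurable (fun x => ‖u x‖ ^ 2 / ‖x‖ ^ 2) :=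
    (huc.measurable.norm.pow_const 2).div (measurable_norm.pow_const 2)
  have hnn : ∀ x, 0 ≤ ‖u x‖ ^ 2 / ‖x‖ ^ 2 := fun x => by positivity
  have hI : Integrable (fun x => ‖u x‖ ^ 2 / ‖x‖ ^ 2) := by
    refine ⟨hm.aestronglyMeasurable, ?_⟩
    rw [hasFiniteIntegral_iff_ofReal (Filter.Eventually.of_forall hnn)]
    exact hlim.trans_lt ENNReal.ofReal_lt_top
  refine ⟨hI, ?_⟩
  rw [← ofReal_integral_eq_lintegral_ofReal hI (Filter.Eventually.of_forall hnn),
    ENNReal.ofReal_le_ofReal_iff (by positivity), le_div_iff₀ hc0] at hlim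
  linarith

/-- coercivity -/
lemma gnc_coercive {N : ℕ} (hN : 3 ≤ N) (b : ℝ) (hb : -(((N : ℝ) - 2) ^ 2 / 4) < b) :
    ∃ κ > 0, ∀ u : EuclideanSpace ℝ (Fin N) → ℂ,
      ContDiff ℝ (⊤ : ℕ∞) u → HasCompactSupport u →
      κ * ∫ x, gradSq u x ≤ ∫ x, (gradSq u x + b * ‖u x‖ ^ 2 / ‖x‖ ^ 2) := by
  have hN' : (3 : ℝ) ≤ N := by exact_mod_cast hN
  have hc0 : 0 < (((N : ℝ) - 2) / 2) ^ 2 := by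
    have : 0 < ((N : ℝ) - 2) / 2 := by linarith
    positivity
  have hb' : -(((N : ℝ) - 2) / 2) ^ 2 < b := by
    have : (((N : ℝ) - 2) / 2) ^ 2 = ((N : ℝ) - 2) ^ 2 / 4 := by ring
    rw [this]; exact hb
  set c : ℝ := (((N : ℝ) - 2) / 2) ^ 2 with hc
  have key : ∀ u : EuclideanSpace ℝ (Fin N) → ℂ,
      ContDiff ℝ (⊤ : ℕ∞) u → HasCompactSupport u →
      ∫ x, (gradSq u x + b * ‖u x‖ ^ 2 / ‖x‖ ^ 2) =
        (∫ x, gradSq u x) + b * ∫ x, ‖u x‖ ^ 2 / ‖x‖ ^ 2 := by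
    intro u hu hs
    have h := (gnc_hardy hN hu hs).1
    have I5 : Integrable (gradSq u) :=
      (gnc_gradSq_cont hu).integrable_of_hasCompactSupport (gnc_gradSq_supp hs)
    simp only [mul_div_assoc]
    rw [integral_add I5 (h.const_mul b), integral_const_mul]
  rcases le_or_gt 0 b with h0 | h0
  · refine ⟨1, one_pos, fun u hu hs => ?_⟩
    rw [key u hu hs, one_mul]
    have : 0 ≤ ∫ x, ‖u x‖ ^ 2 / ‖x‖ ^ 2 := integral_nonneg fun x => by positivity
    have := mul_nonneg h0 this
    linarith
  · refine ⟨1 + b / c, ?_, fun u hu hs => ?_⟩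
    · have : -1 < b / c := by rw [lt_div_iff₀ hc0]; linarith
      linarith
    · rw [key u hu hs]
      have h := (gnc_hardy hN hu hs).2
      rw [← hc] at h
      have h2 : ∫ x, ‖u x‖ ^ 2 / ‖x‖ ^ 2 ≤ (∫ x, gradSq u x) / c := by
        rw [le_div_iff₀ hc0]; linarith
      have h3 := mul_le_mul_of_nonpos_left h2 h0.le
      have : b / c * ∫ x, gradSq u x = b * ((∫ x, gradSq u x) / c) := by ring
      linarith

lemma gnc_opnorm {N : ℕ} (u : EuclideanSpace ℝ (Fin N) → ℂ) (x : EuclideanSpace ℝ (Fin N)) :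
    ‖fderiv ℝ u x‖ ^ 2 ≤ gradSq u x := by
  have h0 : 0 ≤ gradSq u x := by unfold gradSq; positivity
  rw [← Real.le_sqrt (norm_nonneg _) h0]
  apply ContinuousLinearMap.opNorm_le_bound _ (Real.sqrt_nonneg _)
  intro v
  have hv : v = ∑ i, v i • EuclideanSpace.single i (1:ℝ) := by
    ext j
    simp [Pi.single_apply]
  calc ‖fderiv ℝ u x v‖ = ‖∑ i, v i • fderiv ℝ u x (EuclideanSpace.single i (1:ℝ))‖ := by
        conv_lhs => rw [hv]
        simp [map_sum]
    _ ≤ ∑ i, ‖fderiv ℝ u x (EuclideanSpace.single i (1:ℝ))‖ * ‖v i‖ := by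
        refine (norm_sum_le _ _).trans (Finset.sum_le_sum fun i _ => ?_)
        rw [norm_smul, mul_comm]
    _ ≤ √(∑ i, ‖fderiv ℝ u x (EuclideanSpace.single i (1:ℝ))‖ ^ 2) * √(∑ i, ‖v i‖ ^ 2) :=
        Real.sum_mul_le_sqrt_mul_sqrt _ _ _
    _ = _ := by rw [← EuclideanSpace.norm_eq]; rfl

lemma gnc_sobolev {N : ℕ} (hN : 3 ≤ N) (m : ℝ) (hm : m = 2 * N / (N - 2)) :
    ∃ K : ℝ, 0 ≤ K ∧ ∀ u : EuclideanSpace ℝ (Fin N) → ℂ,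
      ContDiff ℝ (⊤ : ℕ∞) u → HasCompactSupport u →
      ∫ x, ‖u x‖ ^ m ≤ K * (∫ x, gradSq u x) ^ (m / 2) := by
  have hN' : (3 : ℝ) ≤ N := by exact_mod_cast hN
  have hN2 : (N : ℝ) - 2 ≠ 0 := by linarith
  have hm0 : 0 < m := by rw [hm]; apply div_pos <;> linarith
  set C : NNReal := eLpNormLESNormFDerivOfEqInnerConst (volume : Measure (EuclideanSpace ℝ (Fin N))) 2
  refine ⟨(C : ℝ) ^ m, by positivity, fun u hu hs => ?_⟩
  have I5 : Integrable (gradSq u) :=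
    (gnc_gradSq_cont hu).integrable_of_hasCompactSupport (gnc_gradSq_supp hs)
  have hg0 : ∀ x, 0 ≤ gradSq u x := fun x => by unfold gradSq; positivity
  have hG0 : 0 ≤ ∫ x, gradSq u x := integral_nonneg hg0
  let mn : NNReal := ⟨m, hm0.le⟩
  have h1 := eLpNorm_le_eLpNorm_fderiv_of_eq_inner (volume : Measure (EuclideanSpace ℝ (Fin N)))
    (hu.of_le (by simp)) hs (p := 2) (p' := mn) (by norm_num) (by simp; omega)
    (by
      change m⁻¹ = _
      rw [hm]; simp; field_simp)
  have h2 : eLpNorm u mn volume ^ m = ∫⁻ x, ‖u x‖ₑ ^ m :=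
    eLpNorm_nnreal_pow_eq_lintegral (p := mn) (by
      intro h
      have := congrArg NNReal.toReal h
      exact hm0.ne' this)
  have h3 : eLpNorm (fderiv ℝ u) (2 : NNReal) volume ^ (2:ℝ) ≤ ENNReal.ofReal (∫ x, gradSq u x) := by
    have := eLpNorm_nnreal_pow_eq_lintegral (f := fderiv ℝ u) (μ := volume) (p := (2 : NNReal)) (by norm_num)
    simp only [NNReal.coe_ofNat] at this
    rw [this, ofReal_integral_eq_lintegral_ofReal I5 (Filter.Eventually.of_forall hg0)]
    apply lintegral_mono
    intro x
    simp only
    rw [← ofReal_norm, ENNReal.ofReal_rpow_of_nonneg (norm_nonneg _) (by norm_num)]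
    apply ENNReal.ofReal_le_ofReal
    simpa using gnc_opnorm u x
  have h4 : ∫⁻ x, ‖u x‖ₑ ^ m ≤ ENNReal.ofReal ((C : ℝ) ^ m * (∫ x, gradSq u x) ^ (m/2)) := by
    rw [← h2]
    calc _ ≤ (C * eLpNorm (fderiv ℝ u) (2 : NNReal) volume) ^ m :=
          ENNReal.rpow_le_rpow (by exact_mod_cast h1) hm0.le
      _ = (C : ENNReal) ^ m * (eLpNorm (fderiv ℝ u) (2 : NNReal) volume ^ (2:ℝ)) ^ (m/2) := by
          rw [ENNReal.mul_rpow_of_nonneg _ _ hm0.le, ← ENNReal.rpow_mul]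
          congr 2; ring
      _ ≤ (C : ENNReal) ^ m * (ENNReal.ofReal (∫ x, gradSq u x)) ^ (m/2) := by gcongr
      _ = _ := by
          rw [ENNReal.ofReal_mul (by positivity), ENNReal.ofReal_rpow_of_nonneg hG0 (by positivity),
            ← ENNReal.ofReal_rpow_of_nonneg (by positivity) hm0.le, ENNReal.ofReal_coe_nnreal]
  have h5 : ∀ x, ‖u x‖ₑ ^ m = ENNReal.ofReal (‖u x‖ ^ m) := fun x => by
    rw [← ofReal_norm, ENNReal.ofReal_rpow_of_nonneg (norm_nonneg _) hm0.le]
  simp only [h5] at h4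
  have huc := hu.continuous
  have hI : Integrable fun x => ‖u x‖ ^ m := by
    apply Continuous.integrable_of_hasCompactSupport
    · exact huc.norm.rpow_const fun x => Or.inr hm0.le
    · exact hs.comp_left (g := fun z : ℂ => ‖z‖ ^ m) (by simp [hm0.ne'])
  rw [← ofReal_integral_eq_lintegral_ofReal hI (Filter.Eventually.of_forall fun x => by positivity),
    ENNReal.ofReal_le_ofReal_iff (by positivity)] at h4
  exact h4

lemma gnc_exponents (n α p e m τ x y : ℝ) (hn : 3 ≤ n) (hm : m = 2 * n / (n - 2)) (he : e < 1)
    (hτ : τ = (p * (2 / (2 - e)) - 2) / (m - 2)) (hx : 0 < x) (hy : 0 < y) :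
    (x ^ (1/2 : ℝ) * y ^ (-(1/m))) ^ (α - n + n * e) * (x ^ (1 - τ) * y ^ τ) ^ (2 - e) =
      x ^ ((n + α - n * p + 2 * p) / 2) * y ^ ((n * p - n - α) / m) := by
  have h1 : n - 2 ≠ 0 := by linarith
  have h2 : 2 - e ≠ 0 := by linarith
  have hn0 : n ≠ 0 := by linarith
  have hm2 : m - 2 = 4 / (n - 2) := by rw [hm]; field_simp; ring
  have hτ2 : τ * (2 - e) = (2 * p - 4 + 2 * e) * (n - 2) / 4 := by
    rw [hτ, hm2]; field_simp; ring
  rw [mul_rpow (by positivity) (by positivity), mul_rpow (by positivity) (by positivity),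
    ← rpow_mul hx.le, ← rpow_mul hx.le, ← rpow_mul hy.le, ← rpow_mul hy.le, hτ2, sub_mul, hτ2]
  rw [show ∀ a b c d : ℝ, a * b * (c * d) = (a * c) * (b * d) by intros; ring, ← rpow_add hx, ← rpow_add hy]
  congr 2
  · ring
  · rw [hm]; field_simp; ring

lemma gnc_term {N : ℕ} (hN : 3 ≤ N) (α p e m K R : ℝ) (S : Set ℝ) (hS : MeasurableSet S)
    (hm : m = 2 * N / (N - 2)) (he0 : 0 < e) (he1 : e < 1) (hp1 : 2 - e < p) (hp2 : p * 2 / (2 - e) < m)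
    (hp0 : 0 < p) (hK0 : 0 ≤ K)
    (u : EuclideanSpace ℝ (Fin N) → ℂ) (hu : ContDiff ℝ (⊤ : ℕ∞) u) (hs : HasCompactSupport u)
    (hx : 0 < ∫ x, ‖u x‖ ^ 2) (hy : 0 < ∫ x, ‖u x‖ ^ m)
    (hR : R = (∫ x, ‖u x‖ ^ 2) ^ (1/2 : ℝ) * (∫ x, ‖u x‖ ^ m) ^ (-(1/m)))
    (hK : (∫⁻ z : EuclideanSpace ℝ (Fin N), gncKer (α - N) S z ^ (1/e)) ^ e ≤
      ENNReal.ofReal (K * R ^ (α - N + N * e))) :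
    ∫⁻ x, ∫⁻ y, gncKer (α - N) S (x - y) * ‖u y‖ₑ ^ p * ‖u x‖ₑ ^ p ≤
      ENNReal.ofReal (K * ((∫ x, ‖u x‖ ^ 2) ^ (((N:ℝ) + α - N * p + 2 * p) / 2) *
        (∫ x, ‖u x‖ ^ m) ^ ((N * p - N - α) / m))) := by
  have hN' : (3 : ℝ) ≤ N := by exact_mod_cast hN
  have huc := hu.continuous
  have h2e : 0 < 2 - e := by linarith
  have ht2 : 2 < p * (2 / (2 - e)) := by
    rw [← mul_div_assoc, lt_div_iff₀ h2e]; linarith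
  have htm : p * (2 / (2 - e)) < m := by rw [← mul_div_assoc]; exact hp2
  have hm0 : 0 < m := by linarith
  have hfm : Measurable fun x => ‖u x‖ₑ := huc.measurable.enorm
  have hY := gnc_young (volume : Measure (EuclideanSpace ℝ (Fin N))) (gncKer (α - N) S)
    (fun x => ‖u x‖ₑ ^ p) (gncKer_meas _ _ hS) (hfm.pow_const p) e he0 he1
  have hI := gnc_interp (volume : Measure (EuclideanSpace ℝ (Fin N))) (fun x => ‖u x‖ₑ) hfm m _ ht2 htm
  simp only [← ENNReal.rpow_mul] at hY
  have hpow : ∀ r : ℝ, 0 < r → ∫⁻ x, ‖u x‖ₑ ^ r = ENNReal.ofReal (∫ x, ‖u x‖ ^ r) := by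
    intro r hr
    have hI : Integrable fun x => ‖u x‖ ^ r := by
      apply Continuous.integrable_of_hasCompactSupport
      · exact huc.norm.rpow_const fun x => Or.inr hr.le
      · exact hs.comp_left (g := fun z : ℂ => ‖z‖ ^ r) (by simp [hr.ne'])
    rw [ofReal_integral_eq_lintegral_ofReal hI (Filter.Eventually.of_forall fun x => by positivity)]
    congr 1; ext x
    rw [← ofReal_norm, ENNReal.ofReal_rpow_of_nonneg (norm_nonneg _) hr.le]
  rw [hpow 2 (by norm_num), hpow m hm0] at hI
  simp only [rpow_ofNat] at hI
  set τ := (p * (2 / (2 - e)) - 2) / (m - 2) with hτ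
  rw [ENNReal.ofReal_rpow_of_pos hx, ENNReal.ofReal_rpow_of_pos hy, ← ENNReal.ofReal_mul (by positivity)] at hI
  refine hY.trans ?_
  refine (mul_le_mul' hK (ENNReal.rpow_le_rpow hI h2e.le)).trans (le_of_eq ?_)
  rw [ENNReal.ofReal_rpow_of_nonneg (by positivity) h2e.le, ← ENNReal.ofReal_mul (by rw [hR]; positivity),
    mul_assoc, hR, gnc_exponents N α p e m τ _ _ hN' hm he1 hτ hx hy]

/-- Gagliardo–Nirenberg-type inequality for the Choquard nonlinearity with
inverse-square potential:
`∫ (I_α∗|u|^p)|u|^p ≤ C ‖u‖_{L²}^{N+α−Np+2p} (∫(|∇u|² + b|u|²/|x|²))^{(Np−N−α)/2}`. -/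
theorem gagliardo_nirenberg_choquard (N : ℕ) (hN : 3 ≤ N) (α p b : ℝ)
    (hα0 : 0 < α) (hαN : α < N)
    (hp1 : ((N : ℝ) + α) / N < p) (hp2 : p < ((N : ℝ) + α) / ((N : ℝ) - 2))
    (hb : -(((N : ℝ) - 2) ^ 2 / 4) < b) :
    ∃ C > 0, ∀ u : EuclideanSpace ℝ (Fin N) → ℂ,
      ContDiff ℝ (⊤ : ℕ∞) u → HasCompactSupport u →
      choquardTerm N α p u ≤
        C * Real.sqrt (∫ x, ‖u x‖ ^ 2) ^ ((N : ℝ) + α - N * p + 2 * p) *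
          (∫ x, (gradSq u x + b * ‖u x‖ ^ 2 / ‖x‖ ^ 2)) ^ (((N : ℝ) * p - N - α) / 2) := by
  have hN' : (3 : ℝ) ≤ N := by exact_mod_cast hN
  have hN0 : (0 : ℝ) < N := by linarith
  have hN2 : (0 : ℝ) < (N : ℝ) - 2 := by linarith
  have hp0 : 0 < p := lt_trans (by positivity) hp1
  obtain ⟨m, hm⟩ : ∃ m : ℝ, m = 2 * N / (N - 2) := ⟨_, rfl⟩
  have hm0 : 0 < m := by rw [hm]; positivity
  rw [div_lt_iff₀ hN0] at hp1
  rw [lt_div_iff₀ hN2] at hp2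
  set γ : ℝ := ((N : ℝ) * p - N - α) with hγ
  have hγ0 : 0 < γ := by rw [hγ]; linarith
  haveI : Nonempty (Fin N) := ⟨⟨0, by omega⟩⟩
  haveI : Nontrivial (EuclideanSpace ℝ (Fin N)) := by
    apply Module.nontrivial_of_finrank_pos (R := ℝ)
    simp; omega
  -- exponents
  obtain ⟨e₂, he₂, he₂'⟩ : ∃ e₂, max 0 (2 - p) < e₂ ∧ e₂ < ((N:ℝ) - α) / N := by
    apply exists_between
    rw [max_lt_iff]
    constructor
    · apply div_pos <;> linarith
    · rw [lt_div_iff₀ hN0]; linarith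
  obtain ⟨e₁, he₁', he₁⟩ : ∃ e₁, ((N:ℝ) - α) / N < e₁ ∧ e₁ < min 1 (2 - p * (N - 2) / N) := by
    apply exists_between
    rw [lt_min_iff]
    constructor
    · rw [div_lt_one hN0]; linarith
    · rw [lt_sub_iff_add_lt, ← add_div, div_lt_iff₀ hN0]; linarith
  rw [max_lt_iff] at he₂
  rw [lt_min_iff] at he₁
  have hpm : ∀ e, e < 1 → e < 2 - p * (N - 2) / N → p * 2 / (2 - e) < m := by
    intro e h1 h
    rw [hm, div_lt_div_iff₀ (by linarith) hN2]
    have h3 : p * (N - 2) / N < 2 - e := by linarith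
    rw [div_lt_iff₀ hN0] at h3
    nlinarith
  obtain ⟨K₁, hK₁0, hK₁⟩ := gncKer_inner (volume : Measure (EuclideanSpace ℝ (Fin N))) (α - N) e₁
    (by linarith) (by
      rw [div_lt_iff₀ hN0] at he₁'
      simp only [finrank_euclideanSpace, Fintype.card_fin]; linarith)
  obtain ⟨K₂, hK₂0, hK₂⟩ := gncKer_outer (volume : Measure (EuclideanSpace ℝ (Fin N))) (α - N) e₂
    he₂.1 (by
      rw [lt_div_iff₀ hN0] at he₂'
      simp only [finrank_euclideanSpace, Fintype.card_fin]; linarith)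
  simp only [finrank_euclideanSpace, Fintype.card_fin] at hK₁ hK₂
  obtain ⟨Ks, hKs0, hKs⟩ := gnc_sobolev hN m hm
  obtain ⟨κ, hκ0, hκ⟩ := gnc_coercive hN b hb
  refine ⟨|rieszConst N α| * (K₁ + K₂) * Ks ^ (γ / m) * κ⁻¹ ^ (γ / 2) + 1, by positivity, ?_⟩
  intro u hu hs
  set G := ∫ x, gradSq u x with hG
  have hG0 : 0 ≤ G := integral_nonneg fun x => by unfold gradSq; positivity
  have hQ := hκ u hu hs
  rw [← hG] at hQ
  set Q := ∫ x, (gradSq u x + b * ‖u x‖ ^ 2 / ‖x‖ ^ 2) with hQdef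
  have hQ0 : 0 ≤ Q := le_trans (by positivity) hQ
  have huc := hu.continuous
  by_cases hu0 : u = 0
  · have : choquardTerm N α p u = 0 := by
      simp [choquardTerm, hu0, zero_rpow hp0.ne']
    rw [this]
    positivity
  have hne : ∃ x, u x ≠ 0 := by
    by_contra! h
    exact hu0 (funext h)
  obtain ⟨x₀, hx₀⟩ := hne
  have hx : 0 < ∫ x, ‖u x‖ ^ 2 := by
    refine Continuous.integral_pos_of_hasCompactSupport_nonneg_nonzero (x := x₀) (by fun_prop) ?_ ?_ ?_
    · exact hs.comp_left (g := fun z : ℂ => ‖z‖ ^ 2) (by simp)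
    · intro x; positivity
    · simpa using hx₀
  have hy : 0 < ∫ x, ‖u x‖ ^ m := by
    refine Continuous.integral_pos_of_hasCompactSupport_nonneg_nonzero (x := x₀) ?_ ?_ ?_ ?_
    · exact huc.norm.rpow_const fun x => Or.inr hm0.le
    · exact hs.comp_left (g := fun z : ℂ => ‖z‖ ^ m) (by simp [hm0.ne'])
    · intro x; positivity
    · have : 0 < ‖u x₀‖ := by simpa using hx₀
      positivity
  obtain ⟨R, hR⟩ : ∃ R, R = (∫ x, ‖u x‖ ^ 2) ^ (1/2 : ℝ) * (∫ x, ‖u x‖ ^ m) ^ (-(1/m)) := ⟨_, rfl⟩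
  have hR0 : 0 < R := by rw [hR]; positivity
  have T₁ := gnc_term hN α p e₁ m K₁ R (Set.Iic R) measurableSet_Iic hm (by linarith) he₁.1
    (by linarith) (hpm _ he₁.1 he₁.2) hp0 hK₁0 u hu hs hx hy hR (hK₁ R hR0)
  have T₂ := gnc_term hN α p e₂ m K₂ R (Set.Ioi R) measurableSet_Ioi hm he₂.1 (by linarith)
    (by linarith) (hpm _ (by linarith) (by linarith)) hp0 hK₂0 u hu hs hx hy hR (hK₂ R hR0)
  rw [← hγ] at T₁ T₂
  have hsb := hKs u hu hs
  rw [← hG] at hsb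
  set X := ∫ x, ‖u x‖ ^ 2 with hX
  set Y := ∫ x, ‖u x‖ ^ m with hY
  set Z := X ^ (((N:ℝ) + α - N * p + 2 * p) / 2) * Y ^ (γ / m) with hZ
  have hZ0 : 0 ≤ Z := by positivity
  have hmeas : ∀ S, MeasurableSet S → Measurable fun z : EuclideanSpace ℝ (Fin N) × EuclideanSpace ℝ (Fin N) =>
      gncKer (α - N) S (z.1 - z.2) * ‖u z.2‖ₑ ^ p * ‖u z.1‖ₑ ^ p := by
    intro S hS
    have := gncKer_meas (E := EuclideanSpace ℝ (Fin N)) (α - N) S hS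
    have := huc.measurable
    fun_prop
  have hsplit : ∀ z : EuclideanSpace ℝ (Fin N), ‖‖z‖ ^ (α - (N:ℝ))‖ₑ =
      gncKer (α - N) (Set.Iic R) z + gncKer (α - N) (Set.Ioi R) z := by
    intro z
    rw [Real.enorm_of_nonneg (by positivity)]
    unfold gncKer
    by_cases hz : ‖z‖ ≤ R
    · simp [hz]
    · simp [hz, not_le.1 hz]
  have hup : ∀ y, ‖‖u y‖ ^ p‖ₑ = ‖u y‖ₑ ^ p := by
    intro y
    rw [Real.enorm_of_nonneg (by positivity), ← ofReal_norm, ENNReal.ofReal_rpow_of_nonneg (norm_nonneg _) hp0.le]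
  have hD : ‖choquardTerm N α p u‖ₑ ≤ ‖rieszConst N α‖ₑ *
      ((∫⁻ x, ∫⁻ y, gncKer (α - N) (Set.Iic R) (x - y) * ‖u y‖ₑ ^ p * ‖u x‖ₑ ^ p) +
       ∫⁻ x, ∫⁻ y, gncKer (α - N) (Set.Ioi R) (x - y) * ‖u y‖ₑ ^ p * ‖u x‖ₑ ^ p) := by
    have m1 := hmeas (Set.Iic R) measurableSet_Iic
    have m2 := hmeas (Set.Ioi R) measurableSet_Ioi
    have m1' := m1.lintegral_prod_right' (ν := volume)
    simp only at m1'
    rw [← lintegral_add_left m1']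
    rw [← lintegral_const_mul' _ _ enorm_ne_top]
    refine (enorm_integral_le_lintegral_enorm _).trans (lintegral_mono fun x => ?_)
    have m1x := m1.comp (measurable_prodMk_left (x := x))
    have m2x := m2.comp (measurable_prodMk_left (x := x))
    simp only [Function.comp_def] at m1x m2x
    rw [← lintegral_add_left m1x, ← lintegral_const_mul' _ _ enorm_ne_top, enorm_mul, hup]
    have : ‖rieszConv N α p u x‖ₑ ≤ ∫⁻ y, ‖rieszConst N α * ‖x - y‖ ^ (α - (N : ℝ)) * ‖u y‖ ^ p‖ₑ :=
      enorm_integral_le_lintegral_enorm _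
    refine (mul_le_mul_left this _).trans (le_of_eq ?_)
    rw [← lintegral_mul_const' _ _ (ENNReal.rpow_ne_top_of_nonneg hp0.le enorm_ne_top)]
    congr 1; ext y
    rw [enorm_mul, enorm_mul, hsplit, hup]
    ring
  have hD2 : choquardTerm N α p u ≤ |rieszConst N α| * (K₁ * Z + K₂ * Z) := by
    have h1 := hD.trans (mul_le_mul_right (add_le_add T₁ T₂) _)
    rw [← ENNReal.ofReal_add (by positivity) (by positivity), ← ofReal_norm, ← ofReal_norm,
      ← ENNReal.ofReal_mul (by positivity), ENNReal.ofReal_le_ofReal_iff (by positivity)] at h1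
    exact (le_abs_self _).trans h1
  have hYb : Y ^ (γ / m) ≤ Ks ^ (γ / m) * (κ⁻¹ ^ (γ / 2) * Q ^ (γ / 2)) := by
    calc Y ^ (γ / m) ≤ (Ks * G ^ (m / 2)) ^ (γ / m) := rpow_le_rpow hy.le hsb (by positivity)
      _ = Ks ^ (γ / m) * G ^ (γ / 2) := by
        rw [mul_rpow hKs0 (by positivity), ← rpow_mul hG0]
        congr 2; field_simp
      _ ≤ Ks ^ (γ / m) * (κ⁻¹ * Q) ^ (γ / 2) := by
        have : G ≤ κ⁻¹ * Q := by
          rw [inv_mul_eq_div, le_div_iff₀ hκ0]; linarith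
        gcongr
      _ = _ := by rw [mul_rpow (by positivity) hQ0]
  have hsq : √X ^ ((N : ℝ) + α - N * p + 2 * p) = X ^ (((N:ℝ) + α - N * p + 2 * p) / 2) := by
    rw [Real.sqrt_eq_rpow, ← rpow_mul hx.le]; congr 1; ring
  rw [hsq]
  set A := X ^ (((N:ℝ) + α - N * p + 2 * p) / 2) with hA
  have hA0 : 0 ≤ A := by positivity
  calc _ ≤ _ := hD2
    _ = |rieszConst N α| * (K₁ + K₂) * A * Y ^ (γ / m) := by rw [hZ]; ring
    _ ≤ |rieszConst N α| * (K₁ + K₂) * A * (Ks ^ (γ / m) * (κ⁻¹ ^ (γ / 2) * Q ^ (γ / 2))) := by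
        gcongr
    _ = (|rieszConst N α| * (K₁ + K₂) * Ks ^ (γ / m) * κ⁻¹ ^ (γ / 2)) * A * Q ^ (γ / 2) := by ring
    _ ≤ _ := by
        have : 0 ≤ A * Q ^ (γ / 2) := by positivity
        nlinarith
end

section
/- Let N ≥ 3, α ∈ (0, N), (N+α)/N < p < (N+α)/(N−2) and b > −(N−2)²/4. Suppose Q : ℝ^N → ℝ is a Schwartz function such that for all x ≠ 0, −ΔQ(x) + b |x|^{−2} Q(x) + Q(x) = (I_α ∗ |Q|^p)(x) |Q(x)|^{p−2} Q(x). Then ∫_{ℝ^N} (I_α ∗ |Q|^p) |Q|^p dx = (2p/(N+α−(N−2)p)) ∫_{ℝ^N} |Q|² dx and ∫_{ℝ^N} ( |∇Q|² + b |Q|²/|x|² ) dx = ((Np−N−α)/(N+α−(N−2)p)) ∫_{ℝ^N} |Q|² dx. -/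
open MeasureTheory Real
open scoped BigOperators

/-- The Laplacian `Δf(x) = ∑ i ∂ᵢᵢ f(x)` of a real-valued function. -/
noncomputable def lapR {N : ℕ} (f : EuclideanSpace ℝ (Fin N) → ℝ)
    (x : EuclideanSpace ℝ (Fin N)) : ℝ :=
  ∑ i, fderiv ℝ (fun y => fderiv ℝ f y (EuclideanSpace.single i 1)) x
    (EuclideanSpace.single i 1)

/-- The Riesz convolution `(I_α ∗ |f|^p)(x)` for a real-valued `f`. -/
noncomputable def rieszConvR (N : ℕ) (α p : ℝ) (f : EuclideanSpace ℝ (Fin N) → ℝ)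
    (x : EuclideanSpace ℝ (Fin N)) : ℝ :=
  ∫ y, rieszConst N α * ‖x - y‖ ^ (α - (N : ℝ)) * |f y| ^ p

namespace NP
open Set Module

def Dec {V : Type*} [Norm V] (M : ℕ) (F : V → ℝ) : Prop :=
  ∃ C, 0 ≤ C ∧ ∀ x, |F x| ≤ C * ((1 + ‖x‖) ^ M)⁻¹

lemma Dec.integrable {V : Type*} [NormedAddCommGroup V] [MeasurableSpace V] {μ : Measure V}
    {M : ℕ} {F k : V → ℝ}
    (h : Dec M F) (hF : AEStronglyMeasurable F μ)
    (hkm : AEStronglyMeasurable k μ) (hk : Integrable (fun z => k z * ((1 + ‖z‖) ^ M)⁻¹) μ) :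
    Integrable (fun z => k z * F z) μ := by
  obtain ⟨C, hC, h⟩ := h
  refine (hk.const_mul C).mono (hkm.fun_mul hF) (Filter.Eventually.of_forall fun z => ?_)
  have h0 : 0 ≤ ((1 + ‖z‖) ^ M)⁻¹ := by positivity
  simp only [norm_mul, Real.norm_eq_abs, abs_of_nonneg h0, abs_of_nonneg hC]
  calc |k z| * |F z| ≤ |k z| * (C * ((1 + ‖z‖) ^ M)⁻¹) := by gcongr; exact h z
    _ = _ := by ring

lemma aux_inv (M : ℕ) {a b : ℝ} (ha : 0 < a) (hb : 0 < b) (h : b ≤ 2 * a) :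
    (a ^ M)⁻¹ ≤ 2 ^ M * (b ^ M)⁻¹ := by
  rw [← div_eq_mul_inv, le_div_iff₀ (by positivity), inv_mul_le_iff₀ (by positivity), ← mul_pow]
  exact pow_le_pow_left₀ hb.le (by linarith) M

/-- Euler-type identity. -/
lemma euler {V : Type*} [NormedAddCommGroup V] [NormedSpace ℝ V] [FiniteDimensional ℝ V]
    [MeasurableSpace V] [BorelSpace V] (μ : Measure V) [μ.IsAddHaarMeasure]
    (M : ℕ) (s : ℝ) (k F : V → ℝ) (hkm : AEStronglyMeasurable k μ)
    (hk : Integrable (fun z => k z * ((1 + ‖z‖) ^ M)⁻¹) μ)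
    (hhom : ∀ t : ℝ, 0 < t → ∀ z, k (t • z) = t ^ s * k z)
    (hF : ContDiff ℝ 1 F) (hd : Dec M F) (hd' : Dec M (fun z => fderiv ℝ F z z)) :
    ∫ z, k z * fderiv ℝ F z z ∂μ = -((finrank ℝ V : ℝ) + s) * ∫ z, k z * F z ∂μ := by
  have hc' : Continuous (fun z => fderiv ℝ F z z) :=
    (hF.continuous_fderiv one_ne_zero).clm_apply continuous_id
  obtain ⟨C, hC, hd'⟩ := hd'
  have key := hasDerivAt_integral_of_dominated_loc_of_deriv_le (μ := μ) (𝕜 := ℝ)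
    (F := fun t z => k z * F (t • z)) (F' := fun t z => k z * fderiv ℝ F (t • z) z)
    (x₀ := 1) (s := Ioo (1/2) 2) (bound := fun z => (2 * C * 2 ^ M) * ‖k z * ((1 + ‖z‖) ^ M)⁻¹‖)
    (Ioo_mem_nhds (by norm_num) (by norm_num))
    (Filter.Eventually.of_forall fun t =>
      hkm.mul (hF.continuous.comp (continuous_const_smul t)).aestronglyMeasurable)
    (by simpa using hd.integrable hF.continuous.aestronglyMeasurable hkm hk)
    (by simpa using hkm.fun_mul hc'.aestronglyMeasurable)
    (Filter.Eventually.of_forall fun z t ht => by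
      have ht0 : 0 < t := lt_trans (by norm_num) ht.1
      have e : fderiv ℝ F (t • z) z = t⁻¹ * fderiv ℝ F (t • z) (t • z) := by
        rw [map_smul, smul_eq_mul]; field_simp
      have h0 : 0 ≤ ((1 + ‖z‖) ^ M)⁻¹ := by positivity
      simp only [norm_mul, Real.norm_eq_abs, abs_of_nonneg h0]
      have h1 : |fderiv ℝ F (t • z) z| ≤ 2 * (C * (2 ^ M * ((1 + ‖z‖) ^ M)⁻¹)) := by
        rw [e, abs_mul, abs_of_pos (inv_pos.2 ht0)]
        have : t⁻¹ ≤ 2 := by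
          rw [inv_le_comm₀ ht0 (by norm_num)]; have := ht.1; linarith
        refine mul_le_mul this ((hd' _).trans ?_) (abs_nonneg _) (by norm_num)
        refine mul_le_mul_of_nonneg_left ?_ hC
        refine aux_inv M (by positivity) (by positivity) ?_
        rw [norm_smul, Real.norm_eq_abs, abs_of_pos ht0]
        have := ht.1
        nlinarith [norm_nonneg z]
      calc |k z| * |fderiv ℝ F (t • z) z| ≤ |k z| * (2 * (C * (2 ^ M * ((1 + ‖z‖) ^ M)⁻¹))) := by
            gcongr
        _ = _ := by ring)
    (hk.norm.const_mul _)
    (Filter.Eventually.of_forall fun z t ht => by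
      have h1 : HasDerivAt (fun t : ℝ => t • z) z t := by
        simpa using (hasDerivAt_id t).smul_const z
      have h2 := ((hF.differentiable one_ne_zero) (t • z)).hasFDerivAt.comp_hasDerivAt t h1
      exact h2.const_mul _)
  have h1 := key.2
  have h2 : HasDerivAt (fun t : ℝ => t ^ (-((finrank ℝ V : ℝ) + s)) * ∫ z, k z * F z ∂μ)
      (-((finrank ℝ V : ℝ) + s) * ∫ z, k z * F z ∂μ) 1 := by
    have := (Real.hasDerivAt_rpow_const (x := 1) (p := -((finrank ℝ V : ℝ) + s))
      (Or.inl one_ne_zero)).mul_const (∫ z, k z * F z ∂μ)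
    simpa using this
  have h3 : (fun t : ℝ => ∫ z, k z * F (t • z) ∂μ) =ᶠ[nhds 1]
      (fun t : ℝ => t ^ (-((finrank ℝ V : ℝ) + s)) * ∫ z, k z * F z ∂μ) := by
    filter_upwards [Ioi_mem_nhds (show (0:ℝ) < 1 by norm_num)] with t ht
    have ht : 0 < t := ht
    have e := Measure.integral_comp_smul_of_nonneg μ (fun z => k z * F z) t (hR := ht.le)
    simp only [hhom t ht, smul_eq_mul, mul_assoc] at e
    rw [integral_const_mul] at e
    have ht' : t ^ s ≠ 0 := (Real.rpow_pos_of_pos ht s).ne'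
    rw [Real.rpow_neg ht.le, Real.rpow_add ht, Real.rpow_natCast, mul_inv]
    field_simp
    field_simp at e
    linarith
  have h4 := (h2.congr_of_eventuallyEq h3).unique h1
  simpa using h4.symm

lemma int_radial {V : Type*} [NormedAddCommGroup V] [NormedSpace ℝ V] [FiniteDimensional ℝ V]
    [Nontrivial V]
    [MeasurableSpace V] [BorelSpace V] (μ : Measure V) [μ.IsAddHaarMeasure]
    (M : ℕ) (s : ℝ) (hs : -(finrank ℝ V : ℝ) < s) (hsM : s + finrank ℝ V < M) :
    Integrable (fun z : V => ‖z‖ ^ s * ((1 + ‖z‖) ^ M)⁻¹) μ := by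
  rw [integrable_fun_norm_addHaar μ (f := fun y => y ^ s * ((1 + y) ^ M)⁻¹)]
  have hd : 0 < finrank ℝ V := finrank_pos
  have hm : AEStronglyMeasurable (fun y : ℝ => y ^ (finrank ℝ V - 1) • (y ^ s * ((1 + y) ^ M)⁻¹))
      volume := by
    apply Measurable.aestronglyMeasurable; fun_prop
  have e : ∀ y : ℝ, 0 < y → y ^ (finrank ℝ V - 1) * y ^ s = y ^ ((finrank ℝ V : ℝ) - 1 + s) := by
    intro y hy
    rw [Real.rpow_add hy, ← Real.rpow_natCast]
    congr 2
    rw [Nat.cast_sub hd]; simp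
  rw [← Ioc_union_Ioi_eq_Ioi (zero_le_one' ℝ)]
  refine IntegrableOn.union ?_ ?_
  · have h1 : IntegrableOn (fun y : ℝ => y ^ ((finrank ℝ V : ℝ) - 1 + s)) (Ioc 0 1) := by
      rw [← intervalIntegrable_iff_integrableOn_Ioc_of_le zero_le_one]
      exact intervalIntegral.intervalIntegrable_rpow' (by linarith)
    refine h1.mono' hm.restrict ((ae_restrict_iff' measurableSet_Ioc).2
      (Filter.Eventually.of_forall fun y hy => ?_))
    have hy0 : 0 < y := hy.1
    rw [Real.norm_of_nonneg (by positivity), smul_eq_mul, ← mul_assoc, e y hy0]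
    refine mul_le_of_le_one_right (by positivity) (inv_le_one_of_one_le₀ (one_le_pow₀ (by linarith)))
  · have h1 : IntegrableOn (fun y : ℝ => y ^ ((finrank ℝ V : ℝ) - 1 + s - M)) (Ioi 1) :=
      integrableOn_Ioi_rpow_of_lt (by linarith) one_pos
    refine h1.mono' hm.restrict ((ae_restrict_iff' measurableSet_Ioi).2
      (Filter.Eventually.of_forall fun y hy => ?_))
    have hy0 : 0 < y := lt_trans one_pos hy
    rw [Real.norm_of_nonneg (by positivity), smul_eq_mul, ← mul_assoc, e y hy0,
      Real.rpow_sub hy0, Real.rpow_natCast, div_eq_mul_inv]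
    gcongr
    linarith

lemma int_prod {V : Type*} [NormedAddCommGroup V] [NormedSpace ℝ V] [FiniteDimensional ℝ V]
    [Nontrivial V]
    [MeasurableSpace V] [BorelSpace V] (μ : Measure V) [μ.IsAddHaarMeasure]
    (M : ℕ) (s : ℝ) (hs : -(finrank ℝ V : ℝ) < s) (hs0 : s < 0) (hsM : finrank ℝ V < M) :
    Integrable (fun z : V × V => ‖z.1 - z.2‖ ^ s * ((1 + ‖z‖) ^ (M + M))⁻¹) (μ.prod μ) := by
  have hsM' : (finrank ℝ V : ℝ) < M := by exact_mod_cast hsM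
  have h1 := int_radial μ M s hs (by linarith)
  have h2 := int_radial μ M 0 (by linarith) (by linarith)
  have h3 := h2.convolution_integrand (ContinuousLinearMap.mul ℝ ℝ) h1
  refine (h3.const_mul (2 ^ M)).mono' ?_ (Filter.Eventually.of_forall fun z => ?_)
  · apply Measurable.aestronglyMeasurable; fun_prop
  · rw [Real.norm_of_nonneg (by positivity)]
    simp only [ContinuousLinearMap.mul_apply', Real.rpow_zero, one_mul]
    have ha : ((1 + ‖z‖) ^ M)⁻¹ ≤ ((1 + ‖z.2‖) ^ M)⁻¹ := by
      gcongr; exact norm_snd_le z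
    have hb : ((1 + ‖z‖) ^ M)⁻¹ ≤ 2 ^ M * ((1 + ‖z.1 - z.2‖) ^ M)⁻¹ := by
      refine aux_inv M (by positivity) (by positivity) ?_
      have := norm_sub_le z.1 z.2
      have := norm_fst_le z
      have := norm_snd_le z
      linarith
    rw [pow_add, mul_inv]
    calc _ ≤ ‖z.1 - z.2‖ ^ s * (((1 + ‖z.2‖) ^ M)⁻¹ * (2 ^ M * ((1 + ‖z.1 - z.2‖) ^ M)⁻¹)) := by
          gcongr
      _ = _ := by ring

lemma Dec.mul {V : Type*} [SeminormedAddCommGroup V] {M : ℕ} {F G : V → ℝ} (hF : Dec M F)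
    (hG : Dec 0 G) : Dec M (fun x => F x * G x) := by
  obtain ⟨C, hC, hF⟩ := hF
  obtain ⟨D, hD, hG⟩ := hG
  refine ⟨C * D, by positivity, fun x => ?_⟩
  rw [abs_mul]
  have h1 := hF x
  have h2 := hG x
  simp only [pow_zero, inv_one, mul_one] at h2
  calc _ ≤ C * ((1 + ‖x‖) ^ M)⁻¹ * D := mul_le_mul h1 h2 (abs_nonneg _) (by positivity)
    _ = _ := by ring

lemma Dec.add {V : Type*} [SeminormedAddCommGroup V] {M : ℕ} {F G : V → ℝ} (hF : Dec M F)
    (hG : Dec M G) : Dec M (fun x => F x + G x) := by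
  obtain ⟨C, hC, hF⟩ := hF
  obtain ⟨D, hD, hG⟩ := hG
  refine ⟨C + D, by positivity, fun x => ?_⟩
  have h1 := hF x
  have h2 := hG x
  have := abs_add_le (F x) (G x)
  rw [add_mul]; linarith

lemma Dec.const_mul {V : Type*} [SeminormedAddCommGroup V] {M : ℕ} {F : V → ℝ} (hF : Dec M F)
    (c : ℝ) : Dec M (fun x => c * F x) := by
  obtain ⟨C, hC, hF⟩ := hF
  refine ⟨|c| * C, by positivity, fun x => ?_⟩
  rw [abs_mul, mul_assoc]
  exact mul_le_mul_of_nonneg_left (hF x) (abs_nonneg _)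

lemma schwartz_dec {V W : Type*} [NormedAddCommGroup V] [NormedSpace ℝ V]
    [NormedAddCommGroup W] [NormedSpace ℝ W] (Q : SchwartzMap V W) (M : ℕ) :
    ∃ C, 0 ≤ C ∧ ∀ x, ‖Q x‖ ≤ C * ((1 + ‖x‖) ^ M)⁻¹ := by
  refine ⟨2 ^ M * (Finset.Iic (M, 0)).sup (fun m => SchwartzMap.seminorm ℝ m.1 m.2) Q,
    by positivity, fun x => ?_⟩
  have := SchwartzMap.one_add_le_sup_seminorm_apply (𝕜 := ℝ) (m := (M, 0)) le_rfl le_rfl Q x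
  rw [norm_iteratedFDeriv_zero] at this
  rw [← div_eq_mul_inv, le_div_iff₀ (by positivity), mul_comm]
  exact this

lemma dec_schwartz {V : Type*} [NormedAddCommGroup V] [NormedSpace ℝ V]
    (Q : SchwartzMap V ℝ) (M : ℕ) : Dec M (⇑Q) := schwartz_dec Q M

lemma dec_X {V : Type*} [NormedAddCommGroup V] [NormedSpace ℝ V]
    (Q : SchwartzMap V ℝ) (M : ℕ) : Dec M (fun x => fderiv ℝ Q x x) := by
  obtain ⟨C, hC, h⟩ := schwartz_dec (SchwartzMap.fderivCLM ℝ V ℝ Q) (M + 1)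
  refine ⟨C, hC, fun x => ?_⟩
  have h1 := h x
  rw [SchwartzMap.fderivCLM_apply] at h1
  calc |fderiv ℝ Q x x| ≤ ‖fderiv ℝ Q x‖ * ‖x‖ := (fderiv ℝ Q x).le_opNorm x
    _ ≤ C * ((1 + ‖x‖) ^ (M + 1))⁻¹ * (1 + ‖x‖) := by
      gcongr; linarith
    _ = _ := by
      have : 0 < 1 + ‖x‖ := by positivity
      field_simp
      ring

lemma cont_X {V : Type*} [NormedAddCommGroup V] [NormedSpace ℝ V]
    (Q : SchwartzMap V ℝ) : Continuous (fun x => fderiv ℝ Q x x) :=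
  ((Q.smooth 1).continuous_fderiv one_ne_zero).clm_apply continuous_id

section
variable {N : ℕ}
local notation "E" => EuclideanSpace ℝ (Fin N)

lemma fr : (finrank ℝ E : ℝ) = N := by simp

lemma int_k (hN : 3 ≤ N) (s : ℝ) (hs : -(N:ℝ) < s) (hs0 : s ≤ 0) {F : E → ℝ}
    (hF : Continuous F) (hd : Dec (N + 1) F) : Integrable (fun x => ‖x‖ ^ s * F x) := by
  have : Nontrivial E := by
    apply Module.nontrivial_of_finrank_pos (R := ℝ); simp; omega
  refine hd.integrable hF.aestronglyMeasurable
    (Measurable.aestronglyMeasurable (by fun_prop)) (int_radial _ _ s ?_ ?_)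
  · simpa using hs
  · simp; linarith

lemma int_one (hN : 3 ≤ N) {F : E → ℝ}
    (hF : Continuous F) (hd : Dec (N + 1) F) : Integrable F := by
  have : 0 < (N:ℝ) := by positivity
  simpa using int_k hN 0 (by linarith) le_rfl hF hd

lemma sq_euler (hN : 3 ≤ N) (s : ℝ) (hs : -(N:ℝ) < s) (hs0 : s ≤ 0) (u : SchwartzMap E ℝ) :
    ∫ x, ‖x‖ ^ s * (u x * fderiv ℝ u x x) = -((N + s) / 2) * ∫ x, ‖x‖ ^ s * (u x) ^ 2 := by
  have : Nontrivial E := by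
    apply Module.nontrivial_of_finrank_pos (R := ℝ); simp; omega
  have hfd : ∀ x, fderiv ℝ (fun x => u x * u x) x x = 2 * (u x * fderiv ℝ u x x) := by
    intro x
    rw [fderiv_fun_mul u.differentiableAt u.differentiableAt]
    simp; ring
  have h := euler (volume : Measure E) (N + 1) s (fun x => ‖x‖ ^ s) (fun x => u x * u x)
    (Measurable.aestronglyMeasurable (by fun_prop)) (int_radial _ _ s (by simpa using hs)
      (by simp; linarith))
    (fun t ht z => by
      rw [norm_smul, Real.norm_of_nonneg ht.le, Real.mul_rpow ht.le (norm_nonneg _)])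
    ((u.smooth 1).mul (u.smooth 1))
    ((dec_schwartz u _).mul (dec_schwartz u _))
    (by simp only [hfd]; exact ((dec_schwartz u _).mul (dec_X u _)).const_mul 2)
  simp only [hfd, fr] at h
  have e : ∀ x, ‖x‖ ^ s * (2 * (u x * fderiv ℝ u x x)) = 2 * (‖x‖ ^ s * (u x * fderiv ℝ u x x)) := by
    intro x; ring
  simp only [e, integral_const_mul, ← pow_two] at h
  linarith

open LineDeriv in
lemma lap_aux (hN : 3 ≤ N) (Q : SchwartzMap E ℝ) (e : E) :
    Integrable (fun x => Q x * fderiv ℝ (fun y => fderiv ℝ Q y e) x e) ∧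
    Integrable (fun x => fderiv ℝ Q x x * fderiv ℝ (fun y => fderiv ℝ Q y e) x e) ∧
    Integrable (fun x => ‖fderiv ℝ Q x e‖ ^ 2) ∧
    ∫ x, Q x * fderiv ℝ (fun y => fderiv ℝ Q y e) x e = - ∫ x, ‖fderiv ℝ Q x e‖ ^ 2 ∧
    ∫ x, fderiv ℝ Q x x * fderiv ℝ (fun y => fderiv ℝ Q y e) x e =
      ((N - 2) / 2) * ∫ x, ‖fderiv ℝ Q x e‖ ^ 2 := by
  set g : SchwartzMap E ℝ := ∂_{e} Q with hg
  have hge : ∀ x, fderiv ℝ Q x e = g x := fun x =>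
    (SchwartzMap.lineDerivOp_apply_eq_fderiv e Q x).symm
  have hgg : ∀ x, fderiv ℝ g x e = (∂_{e} g) x := fun x =>
    (SchwartzMap.lineDerivOp_apply_eq_fderiv e g x).symm
  have hX : ∀ x, HasFDerivAt (fun x => fderiv ℝ Q x x)
      (fderiv ℝ Q x + (fderiv ℝ (fderiv ℝ Q) x).flip x) x := by
    intro x
    have h1 : HasFDerivAt (fderiv ℝ Q) (fderiv ℝ (fderiv ℝ Q) x) x :=
      (((Q.smooth 2).fderiv_right (m := 1) (by norm_num)).differentiable one_ne_zero x).hasFDerivAt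
    simpa using h1.clm_apply (hasFDerivAt_id x)
  have hXe : ∀ x, fderiv ℝ (fun x => fderiv ℝ Q x x) x e = g x + fderiv ℝ g x x := by
    intro x
    rw [(hX x).fderiv]
    have h1 : HasFDerivAt (fderiv ℝ Q) (fderiv ℝ (fderiv ℝ Q) x) x :=
      (((Q.smooth 2).fderiv_right (m := 1) (by norm_num)).differentiable one_ne_zero x).hasFDerivAt
    have h2 : fderiv ℝ g x x = fderiv ℝ (fderiv ℝ Q) x x e := by
      have h3 : HasFDerivAt g ((fderiv ℝ (fderiv ℝ Q) x).flip e) x := by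
        have := h1.clm_apply (hasFDerivAt_const e x)
        simp only [hge] at this
        simpa using this
      rw [h3.fderiv]; rfl
    have hs : IsSymmSndFDerivAt ℝ Q x :=
      (Q.smooth 2).contDiffAt.isSymmSndFDerivAt (by simp)
    rw [h2, hs.eq x e, ← hge]
    simp
  simp only [hge]
  have i1 : Integrable (fun x => Q x * fderiv ℝ g x e) := by
    simp only [hgg]
    exact int_one hN (by fun_prop) ((dec_schwartz _ _).mul (dec_schwartz _ _))
  have i2 : Integrable (fun x => fderiv ℝ Q x x * fderiv ℝ g x e) := by
    simp only [hgg]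
    exact int_one hN ((cont_X Q).mul (∂_{e} g).continuous) ((dec_X _ _).mul (dec_schwartz _ _))
  have i3 : Integrable (fun x => g x * g x) :=
    int_one hN (by fun_prop) ((dec_schwartz _ _).mul (dec_schwartz _ _))
  have i4 : Integrable (fun x => fderiv ℝ g x x * g x) :=
    int_one hN ((cont_X g).mul g.continuous) ((dec_X _ _).mul (dec_schwartz _ _))
  have sq : ∀ x, ‖g x‖ ^ 2 = g x * g x := fun x => by rw [Real.norm_eq_abs, sq_abs, pow_two]
  simp only [sq]
  refine ⟨i1, i2, i3, ?_, ?_⟩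
  · rw [integral_mul_fderiv_eq_neg_fderiv_mul_of_integrable]
    · simp only [hge]
    · simpa only [hge] using i3
    · exact i1
    · exact int_one hN (by fun_prop) ((dec_schwartz _ _).mul (dec_schwartz _ _))
    · exact fun x _ => Q.differentiableAt
    · exact fun x _ => g.differentiableAt
  · rw [integral_mul_fderiv_eq_neg_fderiv_mul_of_integrable]
    · simp only [hXe, add_mul]
      rw [integral_add i3 i4]
      have := sq_euler hN 0 (by simp; omega) le_rfl g
      simp only [Real.rpow_zero, one_mul, add_zero, pow_two] at this
      have e2 : ∫ x, fderiv ℝ g x x * g x = ∫ x, g x * fderiv ℝ g x x := by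
        congr 1; ext x; ring
      rw [e2, this]; ring
    · simp only [hXe, add_mul]
      exact i3.add i4
    · exact i2
    · exact int_one hN ((cont_X Q).mul g.continuous) ((dec_X _ _).mul (dec_schwartz _ _))
    · exact fun x _ => (hX x).differentiableAt
    · exact fun x _ => g.differentiableAt

lemma lap (hN : 3 ≤ N) (Q : SchwartzMap E ℝ) :
    Integrable (fun x => Q x * lapR Q x) ∧
    Integrable (fun x => fderiv ℝ Q x x * lapR Q x) ∧
    Integrable (fun x => gradSq Q x) ∧
    ∫ x, Q x * lapR Q x = - ∫ x, gradSq Q x ∧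
    ∫ x, fderiv ℝ Q x x * lapR Q x = ((N - 2) / 2) * ∫ x, gradSq Q x := by
  have h := fun i : Fin N => lap_aux hN Q (EuclideanSpace.single i 1)
  simp only [lapR, gradSq, Finset.mul_sum]
  refine ⟨integrable_finsetSum _ fun i _ => (h i).1, integrable_finsetSum _ fun i _ => (h i).2.1,
    integrable_finsetSum _ fun i _ => (h i).2.2.1, ?_, ?_⟩
  · rw [integral_finsetSum _ fun i _ => (h i).1, integral_finsetSum _ fun i _ => (h i).2.2.1,
      ← Finset.sum_neg_distrib]
    exact Finset.sum_congr rfl fun i _ => (h i).2.2.2.1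
  · rw [integral_finsetSum _ fun i _ => (h i).2.1, integral_finsetSum _ fun i _ => (h i).2.2.1,
      Finset.mul_sum]
    exact Finset.sum_congr rfl fun i _ => (h i).2.2.2.2

lemma hasF {p : ℝ} (hp : 1 < p) (Q : SchwartzMap E ℝ) (x : E) :
    HasFDerivAt (fun x => |Q x| ^ p) ((p * |Q x| ^ (p - 2) * Q x) • fderiv ℝ Q x) x := by
  have := (hasDerivAt_abs_rpow (Q x) hp).comp_hasFDerivAt x (Q.hasFDerivAt x)
  exact this

lemma cd {p : ℝ} (hp : 1 < p) (Q : SchwartzMap E ℝ) : ContDiff ℝ 1 (fun x => |Q x| ^ p) :=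
  (Q.smooth 1).norm_rpow hp

lemma dec0_rpow {q : ℝ} (hq : 0 < q) (Q : SchwartzMap E ℝ) : Dec 0 (fun x => |Q x| ^ q) := by
  obtain ⟨C, hC, h⟩ := dec_schwartz Q 0
  refine ⟨C ^ q, by positivity, fun x => ?_⟩
  have := h x
  simp only [pow_zero, inv_one, mul_one] at this ⊢
  rw [abs_of_nonneg (by positivity)]
  exact Real.rpow_le_rpow (abs_nonneg _) this hq.le

lemma dec_f {p : ℝ} (hp : 1 < p) (Q : SchwartzMap E ℝ) (M : ℕ) : Dec M (fun x => |Q x| ^ p) := by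
  obtain ⟨C, hC, h⟩ := (dec_schwartz Q M).mul (dec0_rpow (q := p - 1) (by linarith) Q)
  refine ⟨C, hC, fun x => le_trans (le_of_eq ?_) (h x)⟩
  rw [abs_mul, abs_of_nonneg (show 0 ≤ |Q x| ^ p by positivity),
    abs_of_nonneg (show 0 ≤ |Q x| ^ (p - 1) by positivity)]
  rcases eq_or_ne (Q x) 0 with h0 | h0
  · rw [h0]; simp; rw [Real.zero_rpow (by linarith)]
  · rw [Real.rpow_sub_one (abs_pos.2 h0).ne']; field_simp

lemma dec_f' {p : ℝ} (hp : 1 < p) (Q : SchwartzMap E ℝ) (M : ℕ) :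
    Dec M (fun x => fderiv ℝ (fun x => |Q x| ^ p) x x) := by
  obtain ⟨C, hC, h⟩ := ((dec_X Q M).mul (dec0_rpow (q := p - 1) (by linarith) Q)).const_mul p
  refine ⟨C, hC, fun x => le_trans (le_of_eq ?_) (h x)⟩
  beta_reduce
  rw [(hasF hp Q x).fderiv, ContinuousLinearMap.smul_apply, smul_eq_mul]
  simp only [abs_mul, abs_of_nonneg (show 0 ≤ |Q x| ^ (p - 2) by positivity),
    abs_of_nonneg (show 0 ≤ |Q x| ^ (p - 1) by positivity)]
  have : |Q x| ^ (p - 2) * |Q x| = |Q x| ^ (p - 1) := by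
    rcases eq_or_ne (Q x) 0 with h0 | h0
    · rw [h0]; simp; rw [Real.zero_rpow (by linarith)]
    · rw [show p - 2 = p - 1 - 1 by ring, Real.rpow_sub_one (abs_pos.2 h0).ne']; field_simp
  rw [← this]; ring

lemma dec_prod {M : ℕ} {F G : E → ℝ} (hF : Dec M F) (hG : Dec M G) :
    Dec M (fun z : E × E => F z.1 * G z.2) := by
  obtain ⟨C, hC, hF⟩ := hF
  obtain ⟨D, hD, hG⟩ := hG
  refine ⟨C * D, by positivity, fun z => ?_⟩
  rw [abs_mul]
  have h : ((1 + ‖z.1‖) ^ M)⁻¹ * ((1 + ‖z.2‖) ^ M)⁻¹ ≤ ((1 + ‖z‖) ^ M)⁻¹ := by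
    rw [← mul_inv, ← mul_pow]
    refine inv_anti₀ (by positivity) (pow_le_pow_left₀ (by positivity) ?_ _)
    have h1 := norm_nonneg z.1
    have h2 := norm_nonneg z.2
    rw [Prod.norm_def]
    rcases max_choice ‖z.1‖ ‖z.2‖ with h | h <;> rw [h] <;> nlinarith
  calc _ ≤ (C * ((1 + ‖z.1‖) ^ M)⁻¹) * (D * ((1 + ‖z.2‖) ^ M)⁻¹) :=
        mul_le_mul (hF _) (hG _) (abs_nonneg _) (by positivity)
    _ = C * D * (((1 + ‖z.1‖) ^ M)⁻¹ * ((1 + ‖z.2‖) ^ M)⁻¹) := by ring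
    _ ≤ _ := by gcongr

lemma choq (hN : 3 ≤ N) {α p : ℝ} (hα0 : 0 < α) (hαN : α < N) (hp : 1 < p)
    (Q : SchwartzMap E ℝ) :
    Integrable (fun x => rieszConvR N α p Q x * |Q x| ^ p) ∧
    Integrable (fun x => rieszConvR N α p Q x * fderiv ℝ (fun x => |Q x| ^ p) x x) ∧
    ∫ x, rieszConvR N α p Q x * fderiv ℝ (fun x => |Q x| ^ p) x x =
      -((N + α) / 2) * ∫ x, rieszConvR N α p Q x * |Q x| ^ p := by
  have : Nontrivial E := by
    apply Module.nontrivial_of_finrank_pos (R := ℝ); simp; omega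
  set f : E → ℝ := fun x => |Q x| ^ p with hf
  set G : E → ℝ := fun x => fderiv ℝ f x x with hG
  have fc : ContDiff ℝ 1 f := cd hp Q
  have Gc : Continuous G := (fc.continuous_fderiv one_ne_zero).clm_apply continuous_id
  have fdec : ∀ M, Dec M f := dec_f hp Q
  have Gdec : ∀ M, Dec M G := dec_f' hp Q
  set k : E × E → ℝ := fun z => ‖z.1 - z.2‖ ^ (α - N) with hk
  have km : AEStronglyMeasurable k (volume.prod volume) :=
    Measurable.aestronglyMeasurable (by fun_prop)
  have ki : Integrable (fun z => k z * ((1 + ‖z‖) ^ ((N + 1) + (N + 1)))⁻¹) (volume.prod volume) :=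
    int_prod volume (N + 1) (α - N) (by simp; linarith) (by linarith) (by simp)
  have hR : ∀ x, rieszConvR N α p Q x = rieszConst N α * ∫ y, k (x, y) * f y := by
    intro x
    rw [rieszConvR, ← integral_const_mul]
    congr 1; ext y; simp only [hk, hf]; ring
  have ip : ∀ u v : E → ℝ, Continuous u → Continuous v → (∀ M, Dec M u) → (∀ M, Dec M v) →
      Integrable (fun z : E × E => k z * (u z.1 * v z.2)) (volume.prod volume) := by
    intro u v hu hv du dv
    exact (dec_prod (du _) (dv _)).integrable
      (Continuous.aestronglyMeasurable (by fun_prop)) km ki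
  have fub : ∀ u : E → ℝ, Continuous u → (∀ M, Dec M u) →
      Integrable (fun x => rieszConvR N α p Q x * u x) ∧
      ∫ x, rieszConvR N α p Q x * u x =
        rieszConst N α * ∫ z, k z * (u z.1 * f z.2) ∂(volume.prod volume) := by
    intro u hu du
    have h1 := ip u f hu fc.continuous du fdec
    have h2 := h1.integral_prod_left
    have e : ∀ x, rieszConvR N α p Q x * u x =
        rieszConst N α * ∫ y, k (x, y) * (u x * f y) := by
      intro x
      rw [hR, mul_assoc, ← integral_mul_const]
      congr 2; ext y; ring
    simp only [e]
    refine ⟨h2.const_mul _, ?_⟩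
    rw [integral_const_mul, integral_prod _ h1]
  obtain ⟨a1, a2⟩ := fub f fc.continuous fdec
  obtain ⟨b1, b2⟩ := fub G Gc Gdec
  refine ⟨a1, b1, ?_⟩
  have hfd : ∀ z : E × E, fderiv ℝ (fun z : E × E => f z.1 * f z.2) z z =
      G z.1 * f z.2 + f z.1 * G z.2 := by
    intro z
    have d1 := ((fc.differentiable one_ne_zero) z.1).hasFDerivAt.comp z
      (hasFDerivAt_fst (𝕜 := ℝ) (p := z))
    have d2 := ((fc.differentiable one_ne_zero) z.2).hasFDerivAt.comp z
      (hasFDerivAt_snd (𝕜 := ℝ) (p := z))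
    have := (d1.mul d2).fderiv
    have e : (fun z : E × E => f z.1 * f z.2) = (f ∘ Prod.fst) * (f ∘ Prod.snd) := rfl
    rw [e, this]
    simp [hG]; ring
  have eu := euler (volume.prod volume : Measure (E × E)) ((N + 1) + (N + 1)) (α - N) k
    (fun z => f z.1 * f z.2) km ki
    (fun t ht z => by
      simp only [hk, Prod.smul_fst, Prod.smul_snd]
      rw [← smul_sub, norm_smul, Real.norm_of_nonneg ht.le, Real.mul_rpow ht.le (norm_nonneg _)])
    ((fc.comp contDiff_fst).mul (fc.comp contDiff_snd))
    (dec_prod (fdec _) (fdec _))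
    (by simp only [hfd]; exact (dec_prod (Gdec _) (fdec _)).add (dec_prod (fdec _) (Gdec _)))
  simp only [hfd, mul_add] at eu
  rw [integral_add (ip G f Gc fc.continuous Gdec fdec) (ip f G fc.continuous Gc fdec Gdec)] at eu
  have sw : ∫ z, k z * (f z.1 * G z.2) ∂(volume.prod volume) =
      ∫ z, k z * (G z.1 * f z.2) ∂(volume.prod volume) := by
    rw [← integral_prod_swap]
    congr 1; ext z
    simp only [hk, Prod.fst_swap, Prod.snd_swap]
    rw [norm_sub_rev]; ring
  rw [sw] at eu
  simp only [Module.finrank_prod, finrank_euclideanSpace, Fintype.card_fin] at eu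
  push_cast at eu
  rw [a2, b2]
  linear_combination (rieszConst N α / 2) * eu

end

end NP

/-- Nehari and Pohozaev identities for Schwartz solutions of
`𝓛_b Q + Q = (I_α∗|Q|^p)|Q|^{p−2}Q`. -/
theorem nehari_pohozaev_identities (N : ℕ) (hN : 3 ≤ N) (α p b : ℝ)
    (hα0 : 0 < α) (hαN : α < N)
    (hp1 : ((N : ℝ) + α) / N < p) (hp2 : p < ((N : ℝ) + α) / ((N : ℝ) - 2))
    (hb : -(((N : ℝ) - 2) ^ 2 / 4) < b)
    (Q : SchwartzMap (EuclideanSpace ℝ (Fin N)) ℝ)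
    (hQ : ∀ x : EuclideanSpace ℝ (Fin N), x ≠ 0 →
      -lapR (⇑Q) x + b * Q x / ‖x‖ ^ 2 + Q x =
        rieszConvR N α p (⇑Q) x * |Q x| ^ (p - 2) * Q x) :
    (∫ x, rieszConvR N α p (⇑Q) x * |Q x| ^ p) =
        2 * p / ((N : ℝ) + α - ((N : ℝ) - 2) * p) * ∫ x, (Q x) ^ 2 ∧
      (∫ x, (gradSq (⇑Q) x + b * (Q x) ^ 2 / ‖x‖ ^ 2)) =
        ((N : ℝ) * p - N - α) / ((N : ℝ) + α - ((N : ℝ) - 2) * p) * ∫ x, (Q x) ^ 2 := by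
  have hN' : (3:ℝ) ≤ N := by exact_mod_cast hN
  have hp : 1 < p := by
    refine lt_trans ?_ hp1
    rw [lt_div_iff₀ (by linarith)]; linarith
  have hden : 0 < (N : ℝ) + α - ((N : ℝ) - 2) * p := by
    rw [lt_div_iff₀ (by linarith)] at hp2; linarith
  have : Nontrivial (EuclideanSpace ℝ (Fin N)) := by
    apply Module.nontrivial_of_finrank_pos (R := ℝ); simp; omega
  obtain ⟨l1, l2, l3, l4, l5⟩ := NP.lap hN Q
  obtain ⟨c1, c2, c3⟩ := NP.choq hN hα0 hαN hp Q
  have s0 := NP.sq_euler hN 0 (by linarith) le_rfl Q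
  have s2 := NP.sq_euler hN (-2) (by linarith) (by norm_num) Q
  have i1 : Integrable (fun x => ‖x‖ ^ (-2 : ℝ) * (Q x * Q x)) :=
    NP.int_k hN (-2) (by linarith) (by norm_num) (by fun_prop)
      ((NP.dec_schwartz Q _).mul (NP.dec_schwartz Q _))
  have i2 : Integrable (fun x => ‖x‖ ^ (-2 : ℝ) * (Q x * fderiv ℝ Q x x)) :=
    NP.int_k hN (-2) (by linarith) (by norm_num) (Q.continuous.mul (NP.cont_X Q))
      ((NP.dec_schwartz Q _).mul (NP.dec_X Q _))
  have i3 : Integrable (fun x => Q x * Q x) :=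
    NP.int_one hN (by fun_prop) ((NP.dec_schwartz Q _).mul (NP.dec_schwartz Q _))
  have i4 : Integrable (fun x => Q x * fderiv ℝ Q x x) :=
    NP.int_one hN (Q.continuous.mul (NP.cont_X Q)) ((NP.dec_schwartz Q _).mul (NP.dec_X Q _))
  simp only [Real.rpow_zero, one_mul, pow_two] at s0
  simp only [pow_two] at s2
  have hr : ∀ x : EuclideanSpace ℝ (Fin N), ‖x‖ ^ (-2 : ℝ) = (‖x‖ ^ 2)⁻¹ := fun x => by
    rw [Real.rpow_neg (norm_nonneg _)]; norm_cast
  have ne0 : ∀ᵐ x : EuclideanSpace ℝ (Fin N), x ≠ 0 := by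
    simp [ae_iff]
  -- Nehari
  have nehari : (∫ x, gradSq Q x) + b * (∫ x, ‖x‖ ^ (-2 : ℝ) * (Q x * Q x)) + ∫ x, Q x * Q x =
      ∫ x, rieszConvR N α p Q x * |Q x| ^ p := by
    have e : ∫ x, rieszConvR N α p Q x * |Q x| ^ p =
        ∫ x, (-(Q x * lapR Q x) + b * (‖x‖ ^ (-2 : ℝ) * (Q x * Q x)) + Q x * Q x) := by
      refine integral_congr_ae ?_
      filter_upwards [ne0] with x hx
      have h1 := hQ x hx
      have h2 : |Q x| ^ p = |Q x| ^ (p - 2) * Q x * Q x := by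
        rcases eq_or_ne (Q x) 0 with h0 | h0
        · rw [h0]; simp; rw [Real.zero_rpow (by linarith)]
        · rw [Real.rpow_sub (abs_pos.2 h0), Real.rpow_two, sq_abs]; field_simp
      rw [h2, hr]
      linear_combination (-Q x) * h1
    rw [e, integral_add (l1.fun_neg.fun_add (i1.const_mul b)) i3, integral_add l1.fun_neg (i1.const_mul b),
      integral_neg, integral_const_mul, l4]
    ring
  have poho : -(((N : ℝ) - 2) / 2 * ∫ x, gradSq Q x) +
      b * (-((N + (-2 : ℝ)) / 2) * ∫ x, ‖x‖ ^ (-2 : ℝ) * (Q x * Q x)) +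
      -((N + (0 : ℝ)) / 2) * ∫ x, Q x * Q x =
      p⁻¹ * (-((N + α) / 2) * ∫ x, rieszConvR N α p Q x * |Q x| ^ p) := by
    rw [← c3, ← s0, ← s2, ← l5, ← integral_const_mul p⁻¹]
    have e : ∫ x, p⁻¹ * (rieszConvR N α p Q x * fderiv ℝ (fun x => |Q x| ^ p) x x) =
        ∫ x, (-(fderiv ℝ Q x x * lapR Q x) + b * (‖x‖ ^ (-2 : ℝ) * (Q x * fderiv ℝ Q x x))
          + Q x * fderiv ℝ Q x x) := by
      refine integral_congr_ae ?_
      filter_upwards [ne0] with x hx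
      have h1 := hQ x hx
      have h2 : p⁻¹ * p = 1 := inv_mul_cancel₀ (by linarith)
      rw [(NP.hasF hp Q x).fderiv, ContinuousLinearMap.smul_apply, smul_eq_mul, hr]
      linear_combination (-fderiv ℝ Q x x) * h1 +
        (rieszConvR N α p Q x * |Q x| ^ (p - 2) * Q x * fderiv ℝ Q x x) * h2
    rw [e, integral_add (l2.fun_neg.fun_add (i2.const_mul b)) i4, integral_add l2.fun_neg (i2.const_mul b),
      integral_neg, integral_const_mul]
  have split : (∫ x, (gradSq (⇑Q) x + b * (Q x) ^ 2 / ‖x‖ ^ 2)) =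
      (∫ x, gradSq Q x) + b * (∫ x, ‖x‖ ^ (-2 : ℝ) * (Q x * Q x)) := by
    rw [← integral_const_mul, ← integral_add l3 (i1.const_mul b)]
    congr 1; ext x; rw [hr]; ring
  rw [split]
  simp only [pow_two]
  have hp0 : p ≠ 0 := by linarith
  generalize (∫ x, gradSq Q x) = T at *
  generalize (∫ x, ‖x‖ ^ (-2 : ℝ) * (Q x * Q x)) = H at *
  generalize (∫ x, Q x * Q x) = m at *
  generalize (∫ x, rieszConvR N α p Q x * |Q x| ^ p) = P at *
  have hP : P = 2 * p / ((N : ℝ) + α - ((N : ℝ) - 2) * p) * m := by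
    field_simp at poho
    rw [div_mul_eq_mul_div, eq_div_iff hden.ne']
    linear_combination poho + p * (N - 2) * nehari
  refine ⟨hP, ?_⟩
  have : T + b * H = P - m := by linarith
  have hne := hden.ne'
  rw [this, hP, div_mul_eq_mul_div, div_mul_eq_mul_div, eq_div_iff hne, sub_mul,
    div_mul_cancel₀ _ hne]
  ring
end

section
/- Let N ≥ 3, α ∈ (0, N), b > −(N−2)²/4 and (N+α)/N < p < 1 + (2+α)/N. Then for all M₀ > 0 and E₀ ∈ ℝ there exists B > 0 such that every smooth compactly supported u : ℝ^N → ℂ satisfying ∫ |u|² dx ≤ M₀² and (1/2) ∫ ( |∇u|² + b |u|²/|x|² ) dx − (1/(2p)) ∫ (I_α ∗ |u|^p) |u|^p dx ≤ E₀ obeys ∫ ( |∇u|² + b |u|²/|x|² ) dx ≤ B. -/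
open MeasureTheory Real
open scoped BigOperators

theorem aux_young {N : ℕ} (G L : EuclideanSpace ℝ (Fin N) → ENNReal)
    (hG : Measurable G) (hL : Measurable L) (τ : ℝ) (h1 : 1/2 ≤ τ) (h2 : τ ≤ 1) :
    ∫⁻ x, ∫⁻ y, G x ^ τ * G y ^ τ * L (x - y) ^ (2 * (1 - τ)) ≤
      (∫⁻ x, G x) ^ (2 * τ) * (∫⁻ x, L x) ^ (2 * (1 - τ)) := by
  have mG1 : Measurable fun z : EuclideanSpace ℝ (Fin N) × EuclideanSpace ℝ (Fin N) => G z.1 :=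
    hG.comp measurable_fst
  have mG2 : Measurable fun z : EuclideanSpace ℝ (Fin N) × EuclideanSpace ℝ (Fin N) => G z.2 :=
    hG.comp measurable_snd
  have mL : Measurable fun z : EuclideanSpace ℝ (Fin N) × EuclideanSpace ℝ (Fin N) => L (z.1 - z.2) :=
    hL.comp (measurable_fst.sub measurable_snd)
  have key := ENNReal.lintegral_prod_norm_pow_le (μ := (volume : Measure (EuclideanSpace ℝ (Fin N))).prod volume)
    (Finset.univ : Finset (Fin 3))
    (f := ![fun z => G z.1 * G z.2, fun z => G z.1 * L (z.1 - z.2), fun z => G z.2 * L (z.1 - z.2)])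
    (p := ![2 * τ - 1, 1 - τ, 1 - τ])
    (by
      intro i _
      fin_cases i
      · exact (mG1.mul mG2).aemeasurable
      · exact (mG1.mul mL).aemeasurable
      · exact (mG2.mul mL).aemeasurable)
    (by simp [Fin.sum_univ_three]; ring)
    (by
      intro i _
      fin_cases i <;> simp <;> linarith)
  simp only [Fin.prod_univ_three, Matrix.cons_val_zero, Matrix.cons_val_one, Matrix.cons_val] at key
  have e1 : ∫⁻ z, G z.1 * G z.2 ∂((volume : Measure (EuclideanSpace ℝ (Fin N))).prod volume)
      = (∫⁻ x, G x) * ∫⁻ x, G x := lintegral_prod_mul hG.aemeasurable hG.aemeasurable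
  have e2 : ∫⁻ z, G z.1 * L (z.1 - z.2) ∂((volume : Measure (EuclideanSpace ℝ (Fin N))).prod volume)
      = (∫⁻ x, G x) * ∫⁻ x, L x := by
    refine (lintegral_prod _ (mG1.mul mL).aemeasurable).trans ?_
    simp only [Pi.mul_apply]
    have : ∀ x, ∫⁻ y, G x * L (x - y) = G x * ∫⁻ y, L y := by
      intro x
      have hm : Measurable fun y => L (x - y) := hL.comp (measurable_const.sub measurable_id)
      rw [lintegral_const_mul _ hm,
        lintegral_sub_left_eq_self]
    simp only [this]
    rw [lintegral_mul_const _ hG]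
  have e3 : ∫⁻ z, G z.2 * L (z.1 - z.2) ∂((volume : Measure (EuclideanSpace ℝ (Fin N))).prod volume)
      = (∫⁻ x, G x) * ∫⁻ x, L x := by
    refine (lintegral_prod_symm _ (mG2.mul mL).aemeasurable).trans ?_
    simp only [Pi.mul_apply]
    have : ∀ y, ∫⁻ x, G y * L (x - y) = G y * ∫⁻ y, L y := by
      intro x
      have hm : Measurable fun y => L (y - x) := hL.comp (measurable_id.sub measurable_const)
      rw [lintegral_const_mul _ hm,
        lintegral_sub_right_eq_self]
    simp only [this]
    rw [lintegral_mul_const _ hG]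
  rw [e1, e2, e3] at key
  have mm : Measurable fun z : EuclideanSpace ℝ (Fin N) × EuclideanSpace ℝ (Fin N) =>
      G z.1 ^ τ * G z.2 ^ τ * L (z.1 - z.2) ^ (2 * (1 - τ)) := by fun_prop
  have a0 : 0 ≤ 2 * τ - 1 := by linarith
  have b0 : 0 ≤ 1 - τ := by linarith
  calc _ = ∫⁻ z, G z.1 ^ τ * G z.2 ^ τ * L (z.1 - z.2) ^ (2 * (1 - τ))
        ∂((volume : Measure (EuclideanSpace ℝ (Fin N))).prod volume) :=
        (lintegral_prod _ mm.aemeasurable).symm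
    _ = _ := ?_
    _ ≤ _ := key
    _ = _ := ?_
  · refine lintegral_congr fun z => ?_
    have : τ = (2 * τ - 1) + (1 - τ) := by ring
    have e (x : ENNReal) : x ^ τ = x ^ (2 * τ - 1) * x ^ (1 - τ) := by
      rw [← ENNReal.rpow_add_of_nonneg _ _ a0 b0]; ring_nf
    have e' (x : ENNReal) : x ^ (2 * (1 - τ)) = x ^ (1 - τ) * x ^ (1 - τ) := by
      rw [← ENNReal.rpow_add_of_nonneg _ _ b0 b0]; ring_nf
    rw [e, e, e']
    simp only [ENNReal.mul_rpow_of_nonneg _ _ a0, ENNReal.mul_rpow_of_nonneg _ _ b0]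
    ring
  · have e (x : ENNReal) : x ^ (2 * τ) = x ^ (2 * τ - 1) * x ^ (2 * τ - 1) * (x ^ (1 - τ) * x ^ (1 - τ)) := by
      rw [← ENNReal.rpow_add_of_nonneg _ _ a0 a0, ← ENNReal.rpow_add_of_nonneg _ _ b0 b0,
        ← ENNReal.rpow_add_of_nonneg _ _ (by linarith) (by linarith)]; ring_nf
    have e' (x : ENNReal) : x ^ (2 * (1 - τ)) = x ^ (1 - τ) * x ^ (1 - τ) := by
      rw [← ENNReal.rpow_add_of_nonneg _ _ b0 b0]; ring_nf
    rw [e, e']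
    simp only [ENNReal.mul_rpow_of_nonneg _ _ a0, ENNReal.mul_rpow_of_nonneg _ _ b0]
    ring

theorem aux_ker_near {N : ℕ} (hN : 3 ≤ N) (e : ℝ) (he : -(N : ℝ) < e) :
    ∫⁻ z, (Metric.ball (0 : EuclideanSpace ℝ (Fin N)) 1).indicator
      (fun z => ENNReal.ofReal (‖z‖ ^ e)) z < ⊤ := by
  have : Nonempty (Fin N) := ⟨⟨0, by omega⟩⟩
  rw [lintegral_indicator measurableSet_ball]
  have h : IntegrableOn (fun z : EuclideanSpace ℝ (Fin N) => ‖z‖ ^ e) (Metric.ball 0 1) := by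
    rw [integrableOn_fun_norm_addHaar volume (f := fun y => y ^ e)]
    have h2 : IntegrableOn (fun y : ℝ => y ^ ((N : ℝ) - 1 + e)) (Set.Ioo 0 1) := by
      rw [intervalIntegral.integrableOn_Ioo_rpow_iff one_pos]; linarith
    refine h2.congr_fun (fun y hy => ?_) measurableSet_Ioo
    simp only [finrank_euclideanSpace, Fintype.card_fin, smul_eq_mul]
    rw [Real.rpow_add hy.1, ← Real.rpow_natCast, Nat.cast_sub (by omega)]
    simp
  exact (h.lintegral_lt_top)

theorem aux_ker_far {N : ℕ} (hN : 3 ≤ N) (e : ℝ) (he : e < -(N : ℝ)) :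
    ∫⁻ z, (Metric.ball (0 : EuclideanSpace ℝ (Fin N)) 1)ᶜ.indicator
      (fun z => ENNReal.ofReal (‖z‖ ^ e)) z < ⊤ := by
  have h := finite_integral_one_add_norm (E := EuclideanSpace ℝ (Fin N)) (μ := volume)
    (r := -e) (by simp; linarith)
  have h3 : ∫⁻ z, (Metric.ball (0 : EuclideanSpace ℝ (Fin N)) 1)ᶜ.indicator
      (fun z => ENNReal.ofReal (‖z‖ ^ e)) z ≤ 
      ∫⁻ z : EuclideanSpace ℝ (Fin N), ENNReal.ofReal (2 ^ (-e)) * ENNReal.ofReal ((1 + ‖z‖) ^ (- -e)) := by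
    refine lintegral_mono fun z => ?_
    refine Set.indicator_apply_le' (fun hz => ?_) (fun _ => zero_le)
    rw [← ENNReal.ofReal_mul (by positivity)]
    apply ENNReal.ofReal_le_ofReal
    have hz : 1 ≤ ‖z‖ := by simpa using hz
    have hz2 : (1 + ‖z‖) / 2 ≤ ‖z‖ := by linarith
    have := Real.rpow_le_rpow_of_nonpos (z := e) (by positivity) hz2
      (by have : (0 : ℝ) ≤ N := by positivity
          linarith)
    refine this.trans (le_of_eq ?_)
    rw [Real.div_rpow (by positivity) (by positivity), Real.rpow_neg (by norm_num), neg_neg]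
    field_simp
  refine h3.trans_lt ?_
  rw [lintegral_const_mul' _ _ ENNReal.ofReal_ne_top]
  exact ENNReal.mul_lt_top ENNReal.ofReal_lt_top h

theorem aux_gradSq_nonneg {N : ℕ} (u : EuclideanSpace ℝ (Fin N) → ℂ) (x) : 0 ≤ gradSq u x :=
  Finset.sum_nonneg fun _ _ => by positivity

theorem aux_fderiv_le {N : ℕ} (u : EuclideanSpace ℝ (Fin N) → ℂ) (x) :
    ‖fderiv ℝ u x‖ ^ 2 ≤ gradSq u x := by
  set L := fderiv ℝ u x
  have h : ‖L‖ ≤ √(gradSq u x) := by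
    refine L.opNorm_le_bound (Real.sqrt_nonneg _) fun v => ?_
    have hv : v = ∑ i, v i • EuclideanSpace.single i (1 : ℝ) := by
      have := (EuclideanSpace.basisFun (Fin N) ℝ).sum_repr v
      simpa using this.symm
    have h1 : ‖L v‖ ≤ ∑ i, ‖L (EuclideanSpace.single i 1)‖ * |v i| := by
      conv_lhs => rw [hv, map_sum]
      refine (norm_sum_le _ _).trans (le_of_eq ?_)
      refine Finset.sum_congr rfl fun i _ => ?_
      rw [map_smul, norm_smul, mul_comm]; rfl
    have h2 := Real.sum_mul_le_sqrt_mul_sqrt Finset.univ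
      (fun i => ‖L (EuclideanSpace.single i 1)‖) (fun i => |v i|)
    refine h1.trans (h2.trans (le_of_eq ?_))
    rw [EuclideanSpace.norm_eq]
    simp [gradSq, L]
  calc ‖L‖ ^ 2 ≤ √(gradSq u x) ^ 2 := by gcongr
    _ = _ := Real.sq_sqrt (aux_gradSq_nonneg u x)

theorem aux_sobolev {N : ℕ} (hN : 3 ≤ N) : ∃ C : NNReal, ∀ u : EuclideanSpace ℝ (Fin N) → ℂ,
    ContDiff ℝ 1 u → HasCompactSupport u →
    ∫⁻ x, ‖u x‖ₑ ^ (2 * (N : ℝ) / (N - 2)) ≤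
      C * (∫⁻ x, ENNReal.ofReal (gradSq u x)) ^ ((N : ℝ) / (N - 2)) := by
  have hN' : (3 : ℝ) ≤ N := by exact_mod_cast hN
  have hq : 0 < 2 * (N : ℝ) / (N - 2) := by
    apply div_pos <;> linarith
  let q : NNReal := ⟨2 * (N : ℝ) / (N - 2), hq.le⟩
  have hqc : (q : ℝ) = 2 * (N : ℝ) / (N - 2) := rfl
  refine ⟨(SNormLESNormFDerivOfEqConst ℂ (volume : Measure (EuclideanSpace ℝ (Fin N))) ((2 : NNReal) : ℝ)) ^ (q : ℝ), ?_⟩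
  intro u hu hc
  have h := eLpNorm_le_eLpNorm_fderiv_of_eq volume hu hc (p := 2) (p' := q) (by norm_num)
    (by simp; omega) (by
      simp [hqc]
      have : (N : ℝ) - 2 ≠ 0 := by linarith
      field_simp)
  have hq0 : (q : ENNReal) ≠ 0 := by
    intro h0
    have : q = 0 := by exact_mod_cast h0
    have : (q : ℝ) = 0 := by rw [this]; rfl
    linarith
  rw [eLpNorm_eq_lintegral_rpow_enorm_toReal hq0 ENNReal.coe_ne_top,
    eLpNorm_eq_lintegral_rpow_enorm_toReal (by norm_num) ENNReal.coe_ne_top] at h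
  have h' := ENNReal.rpow_le_rpow h hq.le
  rw [ENNReal.mul_rpow_of_nonneg _ _ hq.le, ← ENNReal.rpow_mul, ← ENNReal.rpow_mul] at h'
  simp only [ENNReal.coe_toReal, hqc] at h'
  rw [one_div_mul_cancel hq.ne', ENNReal.rpow_one] at h'
  refine h'.trans ?_
  rw [← hqc, ENNReal.coe_rpow_of_nonneg _ (hqc ▸ hq.le), hqc]
  gcongr
  have : (1 / ((2 : NNReal) : ℝ) * (2 * (N : ℝ) / (N - 2))) = N / (N - 2) := by
    push_cast; ring
  rw [this]
  apply ENNReal.rpow_le_rpow _ (by apply div_nonneg <;> linarith)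
  refine lintegral_mono fun x => ?_
  rw [← ofReal_norm, ENNReal.ofReal_rpow_of_nonneg (norm_nonneg _) (by positivity)]
  apply ENNReal.ofReal_le_ofReal
  have := aux_fderiv_le u x
  push_cast
  exact_mod_cast this

theorem aux_GN {N : ℕ} (hN : 3 ≤ N) (q : ℝ) (hq2 : 2 ≤ q) (hq : q ≤ 2 * (N : ℝ) / (N - 2)) :
    ∃ C : NNReal, ∀ u : EuclideanSpace ℝ (Fin N) → ℂ,
    ContDiff ℝ 1 u → HasCompactSupport u →
    ∫⁻ x, ‖u x‖ₑ ^ q ≤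
      C * (∫⁻ x, ‖u x‖ₑ ^ (2 : ℝ)) ^ (1 - (q - 2) * (N - 2) / 4) *
       (∫⁻ x, ENNReal.ofReal (gradSq u x)) ^ (N * (q - 2) / 4) := by
  have hN' : (3 : ℝ) ≤ N := by exact_mod_cast hN
  obtain ⟨C, hC⟩ := aux_sobolev hN
  set t : ℝ := (q - 2) * (N - 2) / 4 with ht
  have hNN : 0 < (N : ℝ) - 2 := by linarith
  have ht0 : 0 ≤ t := by
    have : 0 ≤ q - 2 := by linarith
    positivity
  have ht1 : 0 ≤ 1 - t := by
    rw [le_div_iff₀ hNN] at hq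
    rw [ht]; linarith
  refine ⟨C ^ t, fun u hu hc => ?_⟩
  have hm : Measurable fun x => ‖u x‖ₑ := hu.continuous.enorm.measurable
  have h1 := ENNReal.lintegral_mul_norm_pow_le (μ := volume)
    (f := fun x => ‖u x‖ₑ ^ (2 : ℝ)) (g := fun x => ‖u x‖ₑ ^ (2 * (N : ℝ) / (N - 2)))
    (hm.pow_const _).aemeasurable (hm.pow_const _).aemeasurable ht1 ht0 (by ring)
  have h2 : ∀ x, ‖u x‖ₑ ^ q = (‖u x‖ₑ ^ (2 : ℝ)) ^ (1 - t) * (‖u x‖ₑ ^ (2 * (N : ℝ) / (N - 2))) ^ t := by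
    intro x
    rw [← ENNReal.rpow_mul, ← ENNReal.rpow_mul, ← ENNReal.rpow_add_of_nonneg _ _ (by positivity) (by positivity)]
    congr 1
    rw [ht]; field_simp; ring
  simp_rw [h2]
  refine h1.trans ?_
  have h3 := ENNReal.rpow_le_rpow (hC u hu hc) ht0
  rw [ENNReal.mul_rpow_of_nonneg _ _ ht0, ← ENNReal.rpow_mul] at h3
  have h4 : (N : ℝ) / (N - 2) * t = N * (q - 2) / 4 := by rw [ht]; field_simp
  rw [h4] at h3
  calc _ ≤ _ := mul_le_mul_right h3 _
    _ = _ := by rw [ENNReal.coe_rpow_of_nonneg _ ht0]; ring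

theorem aux_piece {N : ℕ} (hN : 3 ≤ N) (α p τ : ℝ) (h1 : 1/2 < τ) (h2 : τ < 1)
    (h3 : 2 * τ ≤ p) (h4 : p * (N - 2) ≤ 2 * N * τ) 
    (S : Set (EuclideanSpace ℝ (Fin N))) (hS : MeasurableSet S)
    (hK : ∫⁻ z, S.indicator (fun z => ENNReal.ofReal (‖z‖ ^ ((α - N) / (2 * (1 - τ))))) z < ⊤)
    (m : ENNReal) (hm : m ≠ ⊤) :
    ∃ C : ENNReal, C ≠ ⊤ ∧ ∀ u : EuclideanSpace ℝ (Fin N) → ℂ,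
      ContDiff ℝ 1 u → HasCompactSupport u → (∫⁻ x, ‖u x‖ₑ ^ (2 : ℝ)) ≤ m →
      ∫⁻ x, ∫⁻ y, ‖u x‖ₑ ^ p * ‖u y‖ₑ ^ p *
        S.indicator (fun z => ENNReal.ofReal (‖z‖ ^ (α - N))) (x - y) ≤
      C * (∫⁻ x, ENNReal.ofReal (gradSq u x)) ^ (N * (p - 2 * τ) / 2) := by
  have hN' : (3 : ℝ) ≤ N := by exact_mod_cast hN
  have hNN : 0 < (N : ℝ) - 2 := by linarith
  have hτ : 0 < τ := by linarith
  have hτ1 : 0 < 2 * (1 - τ) := by linarith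
  have hq2 : 2 ≤ p / τ := by rw [le_div_iff₀ hτ]; exact h3
  have hq : p / τ ≤ 2 * (N : ℝ) / (N - 2) := by
    rw [div_le_div_iff₀ hτ hNN]; linarith
  obtain ⟨C, hC⟩ := aux_GN hN (p / τ) hq2 hq
  set K := ∫⁻ z, S.indicator (fun z => ENNReal.ofReal (‖z‖ ^ ((α - N) / (2 * (1 - τ))))) z with hKdef
  have ht : 0 ≤ 1 - (p / τ - 2) * ((N : ℝ) - 2) / 4 := by
    rw [le_div_iff₀ hNN] at hq
    linarith
  refine ⟨(C * m ^ (1 - (p / τ - 2) * ((N : ℝ) - 2) / 4)) ^ (2 * τ) * K ^ (2 * (1 - τ)), ?_, ?_⟩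
  · refine ENNReal.mul_ne_top (ENNReal.rpow_ne_top_of_nonneg (by linarith) ?_)
      (ENNReal.rpow_ne_top_of_nonneg hτ1.le hK.ne)
    exact ENNReal.mul_ne_top ENNReal.coe_ne_top (ENNReal.rpow_ne_top_of_nonneg ht hm)
  · intro u hu hc hum
    have hmu : Measurable fun x => ‖u x‖ₑ := hu.continuous.enorm.measurable
    have hy := aux_young (fun x => ‖u x‖ₑ ^ (p / τ))
      (S.indicator (fun z => ENNReal.ofReal (‖z‖ ^ ((α - N) / (2 * (1 - τ)))))) (hmu.pow_const _)
      (Measurable.indicator (by fun_prop) hS) τ h1.le h2.le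
    have e1 (x : ENNReal) : (x ^ (p / τ)) ^ τ = x ^ p := by
      rw [← ENNReal.rpow_mul, div_mul_cancel₀ _ hτ.ne']
    have e2 (z : EuclideanSpace ℝ (Fin N)) :
        (S.indicator (fun z => ENNReal.ofReal (‖z‖ ^ ((α - N) / (2 * (1 - τ))))) z) ^ (2 * (1 - τ))
        = S.indicator (fun z => ENNReal.ofReal (‖z‖ ^ (α - N))) z := by
      by_cases hz : z ∈ S
      · simp only [Set.indicator_of_mem hz]
        rw [ENNReal.ofReal_rpow_of_nonneg (by positivity) hτ1.le, ← Real.rpow_mul (norm_nonneg _),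
          div_mul_cancel₀ _ hτ1.ne']
      · simp only [Set.indicator_of_notMem hz]
        exact ENNReal.zero_rpow_of_pos hτ1
    simp only [e1, e2] at hy
    refine hy.trans ?_
    rw [← hKdef]
    have h5 : ∫⁻ x, ‖u x‖ₑ ^ (p / τ) ≤ C * m ^ (1 - (p / τ - 2) * ((N : ℝ) - 2) / 4) *
       (∫⁻ x, ENNReal.ofReal (gradSq u x)) ^ (N * (p / τ - 2) / 4) := by
      refine (hC u hu hc).trans ?_
      gcongr
    have h6 := ENNReal.rpow_le_rpow h5 (show 0 ≤ 2 * τ by linarith)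
    rw [ENNReal.mul_rpow_of_nonneg _ _ (by linarith), ← ENNReal.rpow_mul] at h6
    have e3 : (N : ℝ) * (p / τ - 2) / 4 * (2 * τ) = N * (p - 2 * τ) / 2 := by field_simp; ring
    rw [e3] at h6
    calc _ ≤ _ := mul_le_mul_left h6 _
      _ = _ := by ring

set_option maxHeartbeats 1000000 in
theorem aux_choq {N : ℕ} (hN : 3 ≤ N) (α p : ℝ) 
    (hα0 : 0 < α) (hαN : α < N)
    (hp1 : ((N : ℝ) + α) / N < p) (hp2 : p < 1 + (2 + α) / N) (M₀ : ℝ) :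
    ∃ C θ : ℝ, 0 ≤ C ∧ 0 ≤ θ ∧ θ < 1 ∧ ∀ u : EuclideanSpace ℝ (Fin N) → ℂ,
      ContDiff ℝ (⊤ : ℕ∞) u → HasCompactSupport u → (∫ x, ‖u x‖ ^ 2) ≤ M₀ ^ 2 →
      Integrable (gradSq u) → 
      choquardTerm N α p u ≤ C * (1 + ∫ x, gradSq u x) ^ θ := by
  have hN' : (3 : ℝ) ≤ N := by exact_mod_cast hN
  have hN0 : (0 : ℝ) < N := by linarith
  have hNN : 0 < (N : ℝ) - 2 := by linarith
  have hp0 : 1 < p := by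
    refine lt_trans ?_ hp1
    rw [lt_div_iff₀ hN0]; linarith
  rw [div_lt_iff₀ hN0] at hp1
  have hp2' : p * N < N + 2 + α := by
    have : p * N < (1 + (2 + α) / N) * N := by gcongr
    have e : (1 + (2 + α) / N) * N = N + 2 + α := by field_simp; ring
    linarith
  -- near exponent
  obtain ⟨τ₁, a1, a2⟩ : ∃ τ, max (p / 2 - 1 / N) (1 / 2) < τ ∧ τ < ((N : ℝ) + α) / (2 * N) := by
    apply exists_between
    apply max_lt
    · rw [lt_div_iff₀ (by positivity)]
      have : (p / 2 - 1 / N) * (2 * (N : ℝ)) = p * N - 2 := by field_simp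
      linarith
    · rw [lt_div_iff₀ (by positivity)]; linarith
  obtain ⟨τ₂, b1, b2⟩ : ∃ τ, ((N : ℝ) + α) / (2 * N) < τ ∧ τ < min 1 (p / 2) := by
    apply exists_between
    apply lt_min
    · rw [div_lt_iff₀ (by positivity)]; linarith
    · rw [div_lt_iff₀ (by positivity)]; linarith
  obtain ⟨a11, a12⟩ := max_lt_iff.1 a1
  obtain ⟨b21, b22⟩ := lt_min_iff.1 b2
  rw [lt_div_iff₀ (by positivity)] at a2
  rw [div_lt_iff₀ (by positivity)] at b1
  have a13 : p * N - 2 < τ₁ * (2 * N) := by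
    have : (p / 2 - 1 / N) * (2 * (N : ℝ)) = p * N - 2 := by field_simp
    have h : (p / 2 - 1 / N) * (2 * (N : ℝ)) < τ₁ * (2 * N) := by gcongr
    linarith
  have b23 : τ₂ * (2 * N) < p / 2 * (2 * N) := by gcongr
  have b12 : 1 / 2 < τ₂ := by
    by_contra hh
    push Not at hh
    have : τ₂ * (2 * N) ≤ 1 / 2 * (2 * N) := by gcongr
    linarith
  have a22 : τ₁ < 1 := by
    by_contra hh
    push Not at hh
    have : 1 * (2 * (N : ℝ)) ≤ τ₁ * (2 * N) := by gcongr
    linarith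
  have a23 : 2 * τ₁ ≤ p := by
    by_contra hh
    push Not at hh
    have : p * (N : ℝ) ≤ (2 * τ₁) * N := by gcongr
    linarith
  set m := ENNReal.ofReal (M₀ ^ 2)
  obtain ⟨C₁, hC₁, H₁⟩ := aux_piece hN α p τ₁ a12 a22 a23 (by linarith)
    (Metric.ball 0 1) measurableSet_ball (aux_ker_near hN _ (by
      rw [lt_div_iff₀ (by linarith)]
      nlinarith)) m ENNReal.ofReal_ne_top
  obtain ⟨C₂, hC₂, H₂⟩ := aux_piece hN α p τ₂ b12 b21 (by linarith) (by linarith)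
    (Metric.ball 0 1)ᶜ measurableSet_ball.compl (aux_ker_far hN _ (by
      rw [div_lt_iff₀ (by linarith)]
      nlinarith)) m ENNReal.ofReal_ne_top
  set θ₁ : ℝ := N * (p - 2 * τ₁) / 2 with hθ₁
  set θ₂ : ℝ := N * (p - 2 * τ₂) / 2 with hθ₂
  have t10 : 0 ≤ θ₁ := by
    have : 0 ≤ p - 2 * τ₁ := by linarith
    positivity
  have t20 : 0 ≤ θ₂ := by
    have : 0 ≤ p - 2 * τ₂ := by linarith
    positivity
  have t11 : θ₁ < 1 := by rw [hθ₁]; linarith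
  have t21 : θ₂ < 1 := by rw [hθ₂]; linarith
  set A := ‖rieszConst N α‖ₑ with hA
  have hAC : A * (C₁ + C₂) ≠ ⊤ :=
    ENNReal.mul_ne_top enorm_ne_top (ENNReal.add_ne_top.2 ⟨hC₁, hC₂⟩)
  refine ⟨(A * (C₁ + C₂)).toReal, max θ₁ θ₂, ENNReal.toReal_nonneg, le_max_of_le_left t10,
    max_lt t11 t21, ?_⟩
  intro u hu hc hM hint
  have hu1 : ContDiff ℝ 1 u := hu.of_le (by exact_mod_cast le_top)
  have hcont := hu.continuous
  have hmu : Measurable fun x => ‖u x‖ₑ := hcont.enorm.measurable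
  have hX0 : 0 ≤ ∫ x, gradSq u x := integral_nonneg fun x => aux_gradSq_nonneg u x
  set X := ∫ x, gradSq u x with hX
  have hXe : ∫⁻ x, ENNReal.ofReal (gradSq u x) = ENNReal.ofReal X :=
    (ofReal_integral_eq_lintegral_ofReal hint (Filter.Eventually.of_forall fun x => aux_gradSq_nonneg u x)).symm
  have hmass : ∫⁻ x, ‖u x‖ₑ ^ (2 : ℝ) ≤ m := by
    have hi : Integrable fun x => ‖u x‖ ^ 2 := by
      apply Continuous.integrable_of_hasCompactSupport (by fun_prop)
      exact hc.norm.comp_left (g := fun t : ℝ => t ^ 2) (by simp)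
    have e : ∫⁻ x, ‖u x‖ₑ ^ (2 : ℝ) = ENNReal.ofReal (∫ x, ‖u x‖ ^ 2) := by
      rw [ofReal_integral_eq_lintegral_ofReal hi (Filter.Eventually.of_forall fun x => by positivity)]
      refine lintegral_congr fun x => ?_
      rw [← ofReal_norm, ENNReal.ofReal_rpow_of_nonneg (by positivity) (by norm_num)]
      simp
    rw [e]
    exact ENNReal.ofReal_le_ofReal hM
  have h1 := H₁ u hu1 hc hmass
  have h2 := H₂ u hu1 hc hmass
  rw [hXe] at h1 h2
  have hbd : ∀ θ : ℝ, 0 ≤ θ → θ ≤ max θ₁ θ₂ →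
      ENNReal.ofReal X ^ θ ≤ ENNReal.ofReal ((1 + X) ^ max θ₁ θ₂) := by
    intro θ h0 h
    rw [ENNReal.ofReal_rpow_of_nonneg hX0 h0]
    apply ENNReal.ofReal_le_ofReal
    calc X ^ θ ≤ (1 + X) ^ θ := by gcongr; linarith
      _ ≤ _ := Real.rpow_le_rpow_of_exponent_le (by linarith) h
  have main : ‖choquardTerm N α p u‖ₑ ≤ A * (C₁ + C₂) * ENNReal.ofReal ((1 + X) ^ max θ₁ θ₂) := by
    calc ‖choquardTerm N α p u‖ₑ ≤ ∫⁻ x, ‖rieszConv N α p u x * ‖u x‖ ^ p‖ₑ :=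
          enorm_integral_le_lintegral_enorm _
      _ ≤ ∫⁻ x, A * ∫⁻ y, (‖u x‖ₑ ^ p * ‖u y‖ₑ ^ p *
        (Metric.ball 0 1).indicator (fun z => ENNReal.ofReal (‖z‖ ^ (α - N))) (x - y) +
         ‖u x‖ₑ ^ p * ‖u y‖ₑ ^ p *
        (Metric.ball 0 1)ᶜ.indicator (fun z => ENNReal.ofReal (‖z‖ ^ (α - N))) (x - y)) := by
          refine lintegral_mono fun x => ?_
          have ep : ∀ y, ‖‖u y‖ ^ p‖ₑ = ‖u y‖ₑ ^ p := fun y => by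
            rw [Real.enorm_of_nonneg (by positivity), ← ofReal_norm,
              ENNReal.ofReal_rpow_of_nonneg (by positivity) (by linarith)]
          rw [enorm_mul, ep]
          have : ‖rieszConv N α p u x‖ₑ ≤ _ := enorm_integral_le_lintegral_enorm _
          refine (mul_le_mul_left this _).trans (le_of_eq ?_)
          rw [← lintegral_mul_const' _ _ (ENNReal.rpow_ne_top_of_nonneg (by linarith) enorm_ne_top),
            ← lintegral_const_mul' _ _ enorm_ne_top]
          refine lintegral_congr fun y => ?_
          rw [enorm_mul, enorm_mul, ep, ← mul_add, ← Pi.add_apply, Set.indicator_self_add_compl,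
            Real.enorm_of_nonneg (by positivity : (0:ℝ) ≤ ‖x - y‖ ^ (α - N))]
          ring
      _ = A * ((∫⁻ x, ∫⁻ y, (‖u x‖ₑ ^ p * ‖u y‖ₑ ^ p *
        (Metric.ball 0 1).indicator (fun z => ENNReal.ofReal (‖z‖ ^ (α - N))) (x - y))) +
         ∫⁻ x, ∫⁻ y, ‖u x‖ₑ ^ p * ‖u y‖ₑ ^ p *
        (Metric.ball 0 1)ᶜ.indicator (fun z => ENNReal.ofReal (‖z‖ ^ (α - N))) (x - y)) := by
          rw [lintegral_const_mul' _ _ enorm_ne_top]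
          congr 1
          have hk : Measurable ((Metric.ball (0 : EuclideanSpace ℝ (Fin N)) 1).indicator (fun z => ENNReal.ofReal (‖z‖ ^ (α - N)))) :=
            Measurable.indicator (by fun_prop) measurableSet_ball
          have hj : Measurable fun z : EuclideanSpace ℝ (Fin N) × EuclideanSpace ℝ (Fin N) =>
            ‖u z.1‖ₑ ^ p * ‖u z.2‖ₑ ^ p *
            (Metric.ball 0 1).indicator (fun z => ENNReal.ofReal (‖z‖ ^ (α - N))) (z.1 - z.2) := by
            refine Measurable.mul (Measurable.mul ?_ ?_) ?_
            · exact (hmu.comp measurable_fst).pow_const _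
            · exact (hmu.comp measurable_snd).pow_const _
            · exact hk.comp (measurable_fst.sub measurable_snd)
          rw [← lintegral_add_left hj.lintegral_prod_right']
          refine lintegral_congr fun x => ?_
          rw [lintegral_add_left]
          exact hj.comp measurable_prodMk_left
      _ ≤ A * (C₁ * ENNReal.ofReal ((1 + X) ^ max θ₁ θ₂) + C₂ * ENNReal.ofReal ((1 + X) ^ max θ₁ θ₂)) := by
          gcongr
          · exact h1.trans (mul_le_mul_right (hbd _ t10 (le_max_left _ _)) _)
          · exact h2.trans (mul_le_mul_right (hbd _ t20 (le_max_right _ _)) _)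
      _ = _ := by ring
  have := ENNReal.toReal_mono (ENNReal.mul_ne_top hAC ENNReal.ofReal_ne_top) main
  rw [ENNReal.toReal_mul, ENNReal.toReal_ofReal (by positivity), toReal_enorm] at this
  exact (le_abs_self _).trans this

theorem aux_int_fderiv {N : ℕ} (g : EuclideanSpace ℝ (Fin N) → ℝ) (hg : ContDiff ℝ 1 g)
    (hc : HasCompactSupport g) (v : EuclideanSpace ℝ (Fin N)) :
    Integrable (fun x => fderiv ℝ g x v) ∧ ∫ x, fderiv ℝ g x v = 0 := by
  have h1 : Integrable (fun x => fderiv ℝ g x v) := by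
    apply Continuous.integrable_of_hasCompactSupport
    · exact (hg.continuous_fderiv (by norm_num)).clm_apply continuous_const
    · exact hc.fderiv_apply (𝕜 := ℝ) v
  refine ⟨h1, ?_⟩
  have := integral_mul_fderiv_eq_neg_fderiv_mul_of_integrable (μ := volume) (𝕜 := ℝ)
    (f := fun _ : EuclideanSpace ℝ (Fin N) => (1 : ℝ)) (g := g) (v := v)
    (by simp) (by simpa using h1)
    (by simpa using hg.continuous.integrable_of_hasCompactSupport hc)
    (by intro x _; fun_prop) (by intro x _; exact hg.differentiable (by norm_num) x)
  simpa using this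

theorem aux_gradSq_int {N : ℕ} (u : EuclideanSpace ℝ (Fin N) → ℂ)
    (hu : ContDiff ℝ 1 u) (hc : HasCompactSupport u) : Integrable (gradSq u) := by
  unfold gradSq
  refine integrable_finsetSum _ fun i _ => ?_
  apply Continuous.integrable_of_hasCompactSupport
  · exact ((hu.continuous_fderiv (by norm_num)).clm_apply continuous_const).norm.pow 2
  · exact (hc.fderiv_apply (𝕜 := ℝ) (EuclideanSpace.single i 1)).comp_left (g := fun t : ℂ => ‖t‖ ^ 2) (by simp)

theorem aux_hardy_eps {N : ℕ} (hN : 3 ≤ N) (u : EuclideanSpace ℝ (Fin N) → ℂ)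
    (hu : ContDiff ℝ 1 u) (hc : HasCompactSupport u) (ε : ℝ) (hε : 0 < ε) :
    ((N : ℝ) - 2) ^ 2 / 4 * ∫ x, ‖u x‖ ^ 2 / (‖x‖ ^ 2 + ε) ≤ ∫ x, gradSq u x := by
  have hN' : (3 : ℝ) ≤ N := by exact_mod_cast hN
  set c : ℝ := ((N : ℝ) - 2) / 2 with hcdef
  have hc0 : 0 < c := by rw [hcdef]; linarith
  have hpos : ∀ x : EuclideanSpace ℝ (Fin N), 0 < ‖x‖ ^ 2 + ε := fun x => by positivity
  let g : Fin N → EuclideanSpace ℝ (Fin N) → ℝ := fun i x => x i * (‖x‖ ^ 2 + ε)⁻¹ * ‖u x‖ ^ 2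
  have hgd : ∀ i, ContDiff ℝ 1 (g i) := by
    intro i
    have h1 : ContDiff ℝ 1 fun x : EuclideanSpace ℝ (Fin N) => x i := by fun_prop
    have h2 : ContDiff ℝ 1 fun x : EuclideanSpace ℝ (Fin N) => (‖x‖ ^ 2 + ε)⁻¹ :=
      ((contDiff_norm_sq ℝ).add contDiff_const).inv fun x => (hpos x).ne'
    exact (h1.mul h2).mul (hu.norm_sq ℝ)
  have hgc : ∀ i, HasCompactSupport (g i) := by
    intro i
    have h : HasCompactSupport fun x => ‖u x‖ ^ 2 :=
      hc.comp_left (g := fun t : ℂ => ‖t‖ ^ 2) (by simp)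
    exact h.mul_left
  have hder : ∀ i x, fderiv ℝ (g i) x (EuclideanSpace.single i 1) =
      (‖x‖ ^ 2 + ε)⁻¹ * ‖u x‖ ^ 2 - 2 * x i ^ 2 * (‖x‖ ^ 2 + ε)⁻¹ ^ 2 * ‖u x‖ ^ 2
      + 2 * x i * (‖x‖ ^ 2 + ε)⁻¹ * inner ℝ (u x) (fderiv ℝ u x (EuclideanSpace.single i 1)) := by
    intro i x
    have h1 : HasFDerivAt (fun x : EuclideanSpace ℝ (Fin N) => x i)
      (EuclideanSpace.proj i : EuclideanSpace ℝ (Fin N) →L[ℝ] ℝ) x :=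
      (EuclideanSpace.proj i : EuclideanSpace ℝ (Fin N) →L[ℝ] ℝ).hasFDerivAt
    have h2 : HasFDerivAt (fun x : EuclideanSpace ℝ (Fin N) => ‖x‖ ^ 2 + ε) _ x :=
      ((hasFDerivAt_id x).norm_sq).add_const ε
    have h3 := (hasDerivAt_inv (hpos x).ne').comp_hasFDerivAt x h2
    have h4 := ((hu.differentiable (by norm_num) x).hasFDerivAt).norm_sq
    have h5 : HasFDerivAt (g i) _ x := (h1.mul h3).mul h4
    rw [h5.fderiv]
    simp [EuclideanSpace.inner_single_right]
    ring
  have hpt : ∀ x, c ^ 2 * (‖u x‖ ^ 2 / (‖x‖ ^ 2 + ε)) ≤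
      gradSq u x + c * ∑ i, fderiv ℝ (g i) x (EuclideanSpace.single i 1) := by
    intro x
    set w := (‖x‖ ^ 2 + ε)⁻¹ with hw
    have hw0 : 0 < w := inv_pos.2 (hpos x)
    have hs : ∑ i, x i ^ 2 = ‖x‖ ^ 2 := by
      rw [EuclideanSpace.norm_sq_eq]; simp
    have hw1 : ‖x‖ ^ 2 * w ≤ 1 := by
      rw [hw, ← div_eq_mul_inv, div_le_one (hpos x)]; linarith
    have h0 : 0 ≤ ∑ i, ‖fderiv ℝ u x (EuclideanSpace.single i 1) + (c * x i * w) • u x‖ ^ 2 :=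
      Finset.sum_nonneg fun _ _ => by positivity
    have e : ∑ i, ‖fderiv ℝ u x (EuclideanSpace.single i 1) + (c * x i * w) • u x‖ ^ 2
      = gradSq u x + c * ∑ i, fderiv ℝ (g i) x (EuclideanSpace.single i 1) - c * N * w * ‖u x‖ ^ 2
        + (2 * c + c ^ 2) * (∑ i, x i ^ 2) * w ^ 2 * ‖u x‖ ^ 2 := by
      have eN : c * N * w * ‖u x‖ ^ 2 = ∑ i : Fin N, c * w * ‖u x‖ ^ 2 := by
        simp; ring
      rw [eN, gradSq, Finset.mul_sum, Finset.mul_sum, Finset.sum_mul, Finset.sum_mul,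
        ← Finset.sum_add_distrib, ← Finset.sum_sub_distrib, ← Finset.sum_add_distrib]
      refine Finset.sum_congr rfl fun i _ => ?_
      rw [hder, norm_add_sq_real, norm_smul, inner_smul_right, real_inner_comm, mul_pow,
        Real.norm_eq_abs, sq_abs, ← hw]
      ring
    rw [e, hs] at h0
    have h6 : (2 * c + c ^ 2) * ‖x‖ ^ 2 * w ^ 2 * ‖u x‖ ^ 2 ≤ (2 * c + c ^ 2) * w * ‖u x‖ ^ 2 := by
      have : (2 * c + c ^ 2) * ‖x‖ ^ 2 * w ^ 2 * ‖u x‖ ^ 2 =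
        ((2 * c + c ^ 2) * w * ‖u x‖ ^ 2) * (‖x‖ ^ 2 * w) := by ring
      rw [this]
      exact mul_le_of_le_one_right (by positivity) hw1
    have h7 : (N : ℝ) = 2 * c + 2 := by rw [hcdef]; ring
    rw [h7] at h0
    rw [div_eq_mul_inv, ← hw]
    linarith
  have hI : Integrable fun x => ‖u x‖ ^ 2 / (‖x‖ ^ 2 + ε) := by
    apply Continuous.integrable_of_hasCompactSupport
    · exact (hu.continuous.norm.pow 2).div (by fun_prop) fun x => (hpos x).ne'
    · have h : HasCompactSupport fun x => ‖u x‖ ^ 2 :=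
        hc.comp_left (g := fun t : ℂ => ‖t‖ ^ 2) (by simp)
      simp only [div_eq_mul_inv]
      exact h.mul_right
  have hG := aux_gradSq_int u hu hc
  have hD := fun i => aux_int_fderiv (g i) (hgd i) (hgc i) (EuclideanSpace.single i 1)
  have hS : Integrable fun x => c * ∑ i, fderiv ℝ (g i) x (EuclideanSpace.single i 1) :=
    (integrable_finsetSum _ fun i _ => (hD i).1).const_mul c
  have := integral_mono (hI.const_mul (c ^ 2)) (hG.add hS) hpt
  simp only [Pi.add_apply] at this
  rw [integral_const_mul, integral_add hG hS, integral_const_mul,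
    integral_finsetSum _ fun i _ => (hD i).1] at this
  simp only [(hD _).2, Finset.sum_const_zero, mul_zero, add_zero] at this
  have e : ((N : ℝ) - 2) ^ 2 / 4 = c ^ 2 := by rw [hcdef]; ring
  rw [e]; exact this

theorem aux_hardy {N : ℕ} (hN : 3 ≤ N) (u : EuclideanSpace ℝ (Fin N) → ℂ)
    (hu : ContDiff ℝ 1 u) (hc : HasCompactSupport u)
    (hi : Integrable fun x => ‖u x‖ ^ 2 / ‖x‖ ^ 2) :
    ((N : ℝ) - 2) ^ 2 / 4 * ∫ x, ‖u x‖ ^ 2 / ‖x‖ ^ 2 ≤ ∫ x, gradSq u x := by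
  have : Nonempty (Fin N) := ⟨⟨0, by omega⟩⟩
  have h0 : ∀ᵐ x : EuclideanSpace ℝ (Fin N), x ≠ 0 := by
    simp [ae_iff]
  have ht : Filter.Tendsto (fun n : ℕ => ∫ x, ‖u x‖ ^ 2 / (‖x‖ ^ 2 + 1 / ((n : ℝ) + 1))) Filter.atTop
      (nhds (∫ x, ‖u x‖ ^ 2 / ‖x‖ ^ 2)) := by
    refine tendsto_integral_of_dominated_convergence _ ?_ hi ?_ ?_
    · intro n
      refine Continuous.aestronglyMeasurable ?_
      exact (hu.continuous.norm.pow 2).div (by fun_prop) fun x => by positivity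
    · intro n
      filter_upwards [h0] with x hx
      have : 0 < ‖x‖ := norm_pos_iff.2 hx
      rw [Real.norm_of_nonneg (by positivity)]
      gcongr
      have : (0 : ℝ) ≤ 1 / ((n : ℝ) + 1) := by positivity
      linarith
    · filter_upwards [h0] with x hx
      have h1 : 0 < ‖x‖ := norm_pos_iff.2 hx
      have := (tendsto_one_div_add_atTop_nhds_zero_nat (𝕜 := ℝ)).const_add (‖x‖ ^ 2)
      rw [add_zero] at this
      exact tendsto_const_nhds.div this (by positivity)
  refine le_of_tendsto (ht.const_mul _) (Filter.Eventually.of_forall fun n => ?_)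
  exact aux_hardy_eps hN u hu hc _ (by positivity)

theorem aux_coercive {N : ℕ} (hN : 3 ≤ N) (b : ℝ) (hb : -(((N : ℝ) - 2) ^ 2 / 4) < b) :
    ∃ κ : ℝ, 0 < κ ∧ ∀ u : EuclideanSpace ℝ (Fin N) → ℂ,
      ContDiff ℝ 1 u → HasCompactSupport u →
      Integrable (fun x => gradSq u x + b * ‖u x‖ ^ 2 / ‖x‖ ^ 2) →
      κ * ∫ x, gradSq u x ≤ ∫ x, (gradSq u x + b * ‖u x‖ ^ 2 / ‖x‖ ^ 2) := by
  have hN' : (3 : ℝ) ≤ N := by exact_mod_cast hN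
  have hh : 0 < ((N : ℝ) - 2) ^ 2 / 4 := by
    have : 0 < (N : ℝ) - 2 := by linarith
    positivity
  set h := ((N : ℝ) - 2) ^ 2 / 4 with hdef
  rcases le_or_gt 0 b with hb0 | hb0
  · refine ⟨1, one_pos, fun u hu hc hi => ?_⟩
    rw [one_mul]
    refine integral_mono (aux_gradSq_int u hu hc) hi fun x => ?_
    have : 0 ≤ b * ‖u x‖ ^ 2 / ‖x‖ ^ 2 := by positivity
    simp only
    linarith
  · refine ⟨1 + b / h, ?_, fun u hu hc hi => ?_⟩
    · have : -1 < b / h := by rw [lt_div_iff₀ hh]; linarith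
      linarith
    have hG := aux_gradSq_int u hu hc
    have h1 : Integrable fun x => b * ‖u x‖ ^ 2 / ‖x‖ ^ 2 := by
      have := hi.sub hG
      simpa [Pi.sub_def] using this
    have h2 : Integrable fun x => ‖u x‖ ^ 2 / ‖x‖ ^ 2 := by
      refine (h1.const_mul b⁻¹).congr (Filter.Eventually.of_forall fun x => ?_)
      simp only
      rw [mul_div_assoc, inv_mul_cancel_left₀ hb0.ne]
    have h3 := aux_hardy hN u hu hc h2
    rw [← hdef] at h3
    rw [integral_add hG h1]
    have e : ∫ x, b * ‖u x‖ ^ 2 / ‖x‖ ^ 2 = b * ∫ x, ‖u x‖ ^ 2 / ‖x‖ ^ 2 := by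
      simp only [mul_div_assoc]; rw [integral_const_mul]
    rw [e, add_mul, one_mul]
    have h4 : ∫ x, ‖u x‖ ^ 2 / ‖x‖ ^ 2 ≤ (∫ x, gradSq u x) / h := by
      rw [le_div_iff₀ hh]; linarith
    have h5 := mul_le_mul_of_nonpos_left h4 hb0.le
    have h6 : b * ((∫ x, gradSq u x) / h) = b / h * ∫ x, gradSq u x := by ring
    linarith

/-- A priori bound in the mass-subcritical focusing case: bounded mass and
bounded Choquard energy imply a bound on the quadratic form of `𝓛_b`. -/
theorem mass_subcritical_apriori_bound (N : ℕ) (hN : 3 ≤ N) (α p b : ℝ)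
    (hα0 : 0 < α) (hαN : α < N) (hb : -(((N : ℝ) - 2) ^ 2 / 4) < b)
    (hp1 : ((N : ℝ) + α) / N < p) (hp2 : p < 1 + (2 + α) / N) :
    ∀ M₀ > (0 : ℝ), ∀ E₀ : ℝ, ∃ B > (0 : ℝ),
      ∀ u : EuclideanSpace ℝ (Fin N) → ℂ,
        ContDiff ℝ (⊤ : ℕ∞) u → HasCompactSupport u →
        (∫ x, ‖u x‖ ^ 2) ≤ M₀ ^ 2 →
        1 / 2 * (∫ x, (gradSq u x + b * ‖u x‖ ^ 2 / ‖x‖ ^ 2))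
            - 1 / (2 * p) * choquardTerm N α p u ≤ E₀ →
        (∫ x, (gradSq u x + b * ‖u x‖ ^ 2 / ‖x‖ ^ 2)) ≤ B := by
  intro M₀ hM₀ E₀
  have hN' : (3 : ℝ) ≤ N := by exact_mod_cast hN
  have hN0 : (0 : ℝ) < N := by linarith
  have hp0 : 0 < p := by
    refine lt_trans ?_ hp1
    positivity
  obtain ⟨C, θ, hC, hθ0, hθ1, hch⟩ := aux_choq hN α p hα0 hαN hp1 hp2 M₀
  obtain ⟨κ, hκ, hco⟩ := aux_coercive hN b hb
  set D : ℝ := 2 * |E₀| + C / p * (1 + 1 / κ) ^ θ with hD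
  have hD0 : 0 ≤ D := by positivity
  refine ⟨1 + D ^ (1 / (1 - θ)), by positivity, fun u hu hc hM hE => ?_⟩
  have hu1 : ContDiff ℝ 1 u := hu.of_le (by exact_mod_cast le_top)
  by_cases hi : Integrable (fun x => gradSq u x + b * ‖u x‖ ^ 2 / ‖x‖ ^ 2)
  swap
  · rw [integral_undef hi]; positivity
  have hG := aux_gradSq_int u hu1 hc
  have h1 := hch u hu hc hM hG
  have h2 := hco u hu1 hc hi
  have hX0 : 0 ≤ ∫ x, gradSq u x := integral_nonneg fun x => aux_gradSq_nonneg u x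
  set X := ∫ x, gradSq u x
  set H := ∫ x, (gradSq u x + b * ‖u x‖ ^ 2 / ‖x‖ ^ 2)
  have hDp : 0 ≤ D ^ (1 / (1 - θ)) := by positivity
  rcases le_or_gt H 1 with hH | hH
  · linarith
  have hH0 : 0 < H := by linarith
  have h3 : 1 + X ≤ (1 + 1 / κ) * H := by
    have : X ≤ H / κ := by rw [le_div_iff₀ hκ]; linarith
    have e : (1 + 1 / κ) * H = H + H / κ := by ring
    linarith
  have h4 : (1 + X) ^ θ ≤ (1 + 1 / κ) ^ θ * H ^ θ := by
    rw [← Real.mul_rpow (by positivity) hH0.le]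
    exact Real.rpow_le_rpow (by linarith) h3 hθ0
  have h5 : 1 ≤ H ^ θ := Real.one_le_rpow hH.le hθ0
  have h6 : H ≤ D * H ^ θ := by
    have e1 : H ≤ 2 * E₀ + 1 / p * choquardTerm N α p u := by
      have : 1 / (2 * p) * choquardTerm N α p u = 1 / 2 * (1 / p * choquardTerm N α p u) := by
        field_simp
      linarith
    have e2 : 1 / p * choquardTerm N α p u ≤ 1 / p * (C * ((1 + 1 / κ) ^ θ * H ^ θ)) := by
      gcongr
      exact h1.trans (by gcongr)
    have e3 : 2 * E₀ ≤ 2 * |E₀| * H ^ θ := by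
      have := le_abs_self E₀
      have h' : |E₀| ≤ |E₀| * H ^ θ := le_mul_of_one_le_right (abs_nonneg _) h5
      linarith
    have e4 : D * H ^ θ = 2 * |E₀| * H ^ θ + 1 / p * (C * ((1 + 1 / κ) ^ θ * H ^ θ)) := by
      rw [hD]; ring
    linarith
  have h7 : H ^ (1 - θ) ≤ D := by
    rw [Real.rpow_sub hH0, Real.rpow_one, div_le_iff₀ (by positivity)]
    exact h6
  have h8 := Real.rpow_le_rpow (by positivity) h7 (show 0 ≤ 1 / (1 - θ) by
    apply div_nonneg <;> linarith)
  rw [← Real.rpow_mul hH0.le, mul_one_div_cancel (by linarith), Real.rpow_one] at h8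
  linarith
end
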